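/- arXiv:1609.03793 — 5 statements merged into one kernel-verified Lean document; each statement's English description precedes it below -/
import Mathlib

section
/- Let s ∈ (1,∞) and q ∈ [1,s] be real numbers. Let (w_n) be a sequence of measurable functions from ℝ^N to ℝ (N ≥ 1) such that sup_n ∫_{ℝ^N} |w_n|^s dx < ∞, and suppose w_n converges almost everywhere on ℝ^N to a measurable function w. Then lim_{n→∞} ∫_{ℝ^N} | |w_n|^q − |w_n − w|^q − |w|^q |^{s/q} dx = 0. -/
open MeasureTheory Filter Topology

/-!
For every `ε > 0` there is a `C` with
`| ‖x‖ ^ q - ‖x - y‖ ^ q - ‖y‖ ^ q | ^ (s / q) ≤ ε * ‖x‖ ^ s + C * ‖y‖ ^ s`: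
by homogeneity, continuity at `‖x‖ = 1`, `y = 0` handles `‖y‖ ≤ δ * ‖x‖`, and otherwise every term
is controlled by `‖y‖`. Take `x = w n` and `y = wlim`. The first summand has integral at most
`ε * sup ∫ |w n| ^ s`; the second is integrable by Fatou, so the part of the integrand lying below
it tends to zero by dominated convergence.
-/

open scoped ENNReal NNReal

section RpowDefect

variable {q : ℝ}

lemma exists_forall_abs_one_sub_rpow_sub_rpow_le {ε : ℝ} (hq : 0 < q) (hε : 0 < ε) :
    ∃ δ > 0, ∀ t u : ℝ, |1 - t| ≤ u → u ≤ δ → |1 - t ^ q - u ^ q| ≤ ε := by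
  have hcont : Continuous fun z : ℝ × ℝ => |1 - z.1 ^ q - z.2 ^ q| :=
    ((continuous_const.sub (continuous_fst.rpow_const fun _ => .inr hq.le)).sub
      (continuous_snd.rpow_const fun _ => .inr hq.le)).abs
  have hlim : Tendsto (fun z : ℝ × ℝ => |1 - z.1 ^ q - z.2 ^ q|) (𝓝 (1, 0)) (𝓝 0) := by
    simpa [Real.zero_rpow hq.ne'] using hcont.tendsto (1, 0)
  obtain ⟨δ, hδ, hball⟩ :=
    Metric.nhds_basis_closedBall.eventually_iff.1 (hlim.eventually_le_const hε)
  refine ⟨δ, hδ, fun t u htu huδ => hball (x := (t, u)) ?_⟩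
  have hu : 0 ≤ u := (abs_nonneg _).trans htu
  rw [Metric.mem_closedBall, Prod.dist_eq, max_le_iff, dist_comm, Real.dist_eq, Real.dist_0_eq_abs,
    abs_of_nonneg hu]
  exact ⟨htu.trans huδ, huδ⟩

variable {a b c : ℝ}

lemma abs_rpow_sub_rpow_sub_rpow_eq_mul (ha : 0 < a) (hb : 0 ≤ b) (hc : 0 ≤ c) :
    |a ^ q - b ^ q - c ^ q| = |1 - (b / a) ^ q - (c / a) ^ q| * a ^ q := by
  have haq : 0 < a ^ q := Real.rpow_pos_of_pos ha q
  rw [Real.div_rpow hb ha.le, Real.div_rpow hc ha.le, ← abs_of_pos haq, ← abs_mul, abs_of_pos haq]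
  congr 1
  field_simp

lemma abs_rpow_sub_rpow_sub_rpow_le_mul {K : ℝ} (hq : 0 ≤ q) (ha : 0 ≤ a) (hb : 0 ≤ b)
    (hc : 0 ≤ c) (haK : a ≤ K * c) (hbK : b ≤ K * c) (hK : 1 ≤ K) :
    |a ^ q - b ^ q - c ^ q| ≤ 2 * K ^ q * c ^ q := by
  have hKc : K ^ q * c ^ q = (K * c) ^ q := (Real.mul_rpow (by positivity) hc).symm
  have haq : a ^ q ≤ K ^ q * c ^ q := hKc ▸ Real.rpow_le_rpow ha haK hq
  have hbq : b ^ q ≤ K ^ q * c ^ q := hKc ▸ Real.rpow_le_rpow hb hbK hq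
  have hcq : c ^ q ≤ K ^ q * c ^ q :=
    le_mul_of_one_le_left (Real.rpow_nonneg hc q) (Real.one_le_rpow hK hq)
  have := Real.rpow_nonneg ha q
  have := Real.rpow_nonneg hb q
  have := Real.rpow_nonneg hc q
  exact abs_le.2 ⟨by linarith, by linarith⟩

lemma exists_forall_abs_rpow_sub_rpow_sub_rpow_le_max {ε : ℝ} (hq : 0 < q) (hε : 0 < ε) :
    ∃ C : ℝ≥0, ∀ a b c : ℝ, 0 ≤ a → 0 ≤ b → |a - b| ≤ c →
      |a ^ q - b ^ q - c ^ q| ≤ max (ε * a ^ q) (C * c ^ q) := by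
  obtain ⟨δ, hδ, hnear⟩ := exists_forall_abs_one_sub_rpow_sub_rpow_le hq hε
  refine ⟨⟨2 * (1 + δ⁻¹) ^ q, by positivity⟩, fun a b c ha hb habc => ?_⟩
  have hc : 0 ≤ c := (abs_nonneg _).trans habc
  by_cases hca : 0 < a ∧ c ≤ δ * a
  · obtain ⟨ha, hca⟩ := hca
    have hba : |1 - b / a| ≤ c / a := by
      rw [one_sub_div ha.ne', abs_div, abs_of_pos ha]
      gcongr
    rw [abs_rpow_sub_rpow_sub_rpow_eq_mul ha hb hc]
    refine le_max_of_le_left ?_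
    gcongr
    exact hnear _ _ hba ((div_le_iff₀ ha).2 hca)
  · have hac : a ≤ δ⁻¹ * c := by
      rcases ha.eq_or_lt with rfl | ha
      · positivity
      · exact (le_inv_mul_iff₀ hδ).2 (not_le.1 fun h => hca ⟨ha, h⟩).le
    have hbac : b ≤ a + c := by linarith [neg_le_of_abs_le habc]
    refine le_max_of_le_right ?_
    exact abs_rpow_sub_rpow_sub_rpow_le_mul hq.le ha hb hc (by linarith) (by linarith)
      (by simpa using hδ.le)

lemma exists_forall_enorm_norm_rpow_sub_sub_rpow_le_add {E : Type*} [SeminormedAddCommGroup E]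
    {r : ℝ} (hq : 0 < q) (hr : 0 < r) {ε : ℝ≥0} (hε : 0 < ε) :
    ∃ C : ℝ≥0, ∀ x y : E, ‖‖x‖ ^ q - ‖x - y‖ ^ q - ‖y‖ ^ q‖ₑ ^ r ≤
      ε * ‖x‖ₑ ^ (q * r) + C * ‖y‖ₑ ^ (q * r) := by
  obtain ⟨C, hC⟩ := exists_forall_abs_rpow_sub_rpow_sub_rpow_le_max hq
    (NNReal.coe_pos.2 (NNReal.rpow_pos (p := r⁻¹) hε))
  refine ⟨C ^ r, fun x y => ?_⟩
  have hmax : ‖‖x‖ ^ q - ‖x - y‖ ^ q - ‖y‖ ^ q‖ₑ ≤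
      max ((ε ^ r⁻¹ : ℝ≥0) * ‖x‖ₑ ^ q) (C * ‖y‖ₑ ^ q) := by
    have h := ENNReal.ofReal_le_ofReal (hC ‖x‖ ‖x - y‖ ‖y‖ (norm_nonneg x) (norm_nonneg _)
      (by simpa using abs_norm_sub_norm_le x (x - y)))
    simpa only [← Real.enorm_eq_ofReal_abs, ENNReal.ofReal_max, NNReal.zero_le_coe,
      ENNReal.ofReal_mul, ENNReal.ofReal_coe_nnreal, ofReal_norm,
      ← ENNReal.ofReal_rpow_of_nonneg (norm_nonneg _) hq.le] using h
  calc ‖‖x‖ ^ q - ‖x - y‖ ^ q - ‖y‖ ^ q‖ₑ ^ r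
      ≤ max ((ε ^ r⁻¹ : ℝ≥0) * ‖x‖ₑ ^ q) (C * ‖y‖ₑ ^ q) ^ r := by gcongr
    _ = max (ε * ‖x‖ₑ ^ (q * r)) ((C ^ r : ℝ≥0) * ‖y‖ₑ ^ (q * r)) := by
        rw [(ENNReal.monotone_rpow_of_nonneg hr.le).map_max, ENNReal.mul_rpow_of_nonneg _ _ hr.le,
          ENNReal.mul_rpow_of_nonneg _ _ hr.le, ← ENNReal.rpow_mul, ← ENNReal.rpow_mul,
          ← ENNReal.coe_rpow_of_nonneg _ hr.le, ← ENNReal.coe_rpow_of_nonneg _ hr.le,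
          NNReal.rpow_inv_rpow hr.ne']
    _ ≤ ε * ‖x‖ₑ ^ (q * r) + (C ^ r : ℝ≥0) * ‖y‖ₑ ^ (q * r) :=
        max_le_add_of_nonneg (by simp) (by simp)

end RpowDefect

section Convergence

variable {α ι : Type*} [MeasurableSpace α] {μ : Measure α} {l : Filter ι} [l.IsCountablyGenerated]

lemma tendsto_lintegral_zero_of_forall_le_mul_add {F G : ι → α → ℝ≥0∞} {H : α → ℝ≥0∞} {M : ℝ≥0∞}
    (hF : ∀ i, AEMeasurable (F i) μ) (hH : AEMeasurable H μ)
    (hM : M ≠ ∞) (hG : ∀ i, ∫⁻ x, G i x ∂μ ≤ M) (hHint : ∫⁻ x, H x ∂μ ≠ ∞)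
    (hle : ∀ ε : ℝ≥0, 0 < ε → ∃ C : ℝ≥0, ∀ i, ∀ᵐ x ∂μ, F i x ≤ ε * G i x + C * H x)
    (hlim : ∀ᵐ x ∂μ, Tendsto (fun i => F i x) l (𝓝 0)) :
    Tendsto (fun i => ∫⁻ x, F i x ∂μ) l (𝓝 0) := by
  rw [ENNReal.tendsto_nhds_zero]
  intro η hη
  have hη2 : 0 < η / 2 := ENNReal.half_pos hη.ne'
  obtain ⟨ε, hε, hεM⟩ := ENNReal.exists_nnreal_pos_mul_lt hM hη2.ne'
  obtain ⟨C, hC⟩ := hle ε hε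
  have hmin (i : ι) : AEMeasurable (fun x => min (F i x) (C * H x)) μ :=
    (hF i).min (hH.const_mul _)
  have hmin_lim : Tendsto (fun i => ∫⁻ x, min (F i x) (C * H x) ∂μ) l (𝓝 0) := by
    rw [← lintegral_zero (μ := μ)]
    refine tendsto_lintegral_filter_of_dominated_convergence' (fun x => C * H x)
      (.of_forall hmin) (.of_forall fun i => .of_forall fun x => min_le_right _ _) ?_ ?_
    · rw [lintegral_const_mul' _ _ ENNReal.coe_ne_top]
      exact ENNReal.mul_ne_top ENNReal.coe_ne_top hHint
    · filter_upwards [hlim] with x hx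
      exact tendsto_of_tendsto_of_tendsto_of_le_of_le tendsto_const_nhds hx
        (fun _ => zero_le) fun _ => min_le_left _ _
  filter_upwards [ENNReal.tendsto_nhds_zero.1 hmin_lim _ hη2] with i hi
  calc ∫⁻ x, F i x ∂μ
      ≤ ∫⁻ x, (ε * G i x + min (F i x) (C * H x)) ∂μ := by
        refine lintegral_mono_ae ((hC i).mono fun x hx => ?_)
        rw [← min_add_add_left]
        exact le_min le_add_self hx
    _ = ε * ∫⁻ x, G i x ∂μ + ∫⁻ x, min (F i x) (C * H x) ∂μ := by
        rw [lintegral_add_right' _ (hmin i), lintegral_const_mul' _ _ ENNReal.coe_ne_top]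
    _ ≤ η / 2 + η / 2 := by
        gcongr
        exact (mul_le_mul_right (hG i) _).trans hεM.le
    _ = η := ENNReal.add_halves η

variable [l.NeBot] {E : Type*} [SeminormedAddCommGroup E] {w : ι → α → E} {wlim : α → E}
  {s : ℝ} {M : ℝ≥0∞}

lemma lintegral_enorm_rpow_le_of_tendsto_ae (hw : ∀ i, AEStronglyMeasurable (w i) μ)
    (hM : ∀ i, ∫⁻ x, ‖w i x‖ₑ ^ s ∂μ ≤ M)
    (hlim : ∀ᵐ x ∂μ, Tendsto (fun i => w i x) l (𝓝 (wlim x))) :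
    ∫⁻ x, ‖wlim x‖ₑ ^ s ∂μ ≤ M :=
  calc ∫⁻ x, ‖wlim x‖ₑ ^ s ∂μ
      = ∫⁻ x, liminf (fun i => ‖w i x‖ₑ ^ s) l ∂μ := by
        refine lintegral_congr_ae (hlim.mono fun x hx => ?_)
        exact (hx.enorm.ennrpow_const s).liminf_eq.symm
    _ ≤ liminf (fun i => ∫⁻ x, ‖w i x‖ₑ ^ s ∂μ) l :=
        lintegral_liminf_le' fun i => (hw i).enorm.pow_const s
    _ ≤ M := liminf_le_of_frequently_le' (.of_forall hM)

theorem local_brezis_lieb_first_general {q : ℝ} (hs : 0 < s) (hq : 0 < q)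
    (hw : ∀ i, AEStronglyMeasurable (w i) μ) (hM : M ≠ ∞)
    (hbound : ∀ i, ∫⁻ x, ‖w i x‖ₑ ^ s ∂μ ≤ M)
    (hlim : ∀ᵐ x ∂μ, Tendsto (fun i => w i x) l (𝓝 (wlim x))) :
    Tendsto (fun i =>
        ∫⁻ x, ‖‖w i x‖ ^ q - ‖w i x - wlim x‖ ^ q - ‖wlim x‖ ^ q‖ₑ ^ (s / q) ∂μ)
      l (𝓝 0) := by
  have hr : 0 < s / q := div_pos hs hq
  have hwlim : AEStronglyMeasurable wlim μ := aestronglyMeasurable_of_tendsto_ae l hw hlim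
  refine tendsto_lintegral_zero_of_forall_le_mul_add (G := fun i x => ‖w i x‖ₑ ^ s)
    (H := fun x => ‖wlim x‖ₑ ^ s) (fun i => ?_) (hwlim.enorm.pow_const s) hM hbound
    (ne_top_of_le_ne_top hM (lintegral_enorm_rpow_le_of_tendsto_ae hw hbound hlim)) ?_ ?_
  · have := (hw i).norm.aemeasurable
    have := ((hw i).sub hwlim).norm.aemeasurable
    have := hwlim.norm.aemeasurable
    fun_prop
  · intro ε hε
    obtain ⟨C, hC⟩ := exists_forall_enorm_norm_rpow_sub_sub_rpow_le_add (E := E) hq hr hε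
    rw [mul_div_cancel₀ s hq.ne'] at hC
    exact ⟨C, fun i => .of_forall fun x => hC _ _⟩
  · filter_upwards [hlim] with x hx
    have hdefect := (((hx.norm.rpow_const (.inr hq.le)).sub
      ((hx.sub_const (wlim x)).norm.rpow_const (.inr hq.le))).sub_const
        (‖wlim x‖ ^ q)).enorm.ennrpow_const (s / q)
    simpa [Real.zero_rpow hq.ne', ENNReal.zero_rpow_of_pos hr] using hdefect

end Convergence

/-- Local Brezis–Lieb lemma, first identity (Lemma 3.3 of the paper). -/
theorem local_brezis_lieb_first
    (N : ℕ) (hN : 1 ≤ N) (s q : ℝ) (hs : 1 < s) (hq1 : 1 ≤ q) (hqs : q ≤ s)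
    (w : ℕ → EuclideanSpace ℝ (Fin N) → ℝ) (wlim : EuclideanSpace ℝ (Fin N) → ℝ)
    (hmeas : ∀ n, Measurable (w n)) (hwmeas : Measurable wlim)
    (hbound : ∃ C : ℝ, ∀ n,
      ∫⁻ x, ENNReal.ofReal (|w n x| ^ s) ∂volume ≤ ENNReal.ofReal C)
    (hae : ∀ᵐ x ∂(volume : Measure (EuclideanSpace ℝ (Fin N))),
      Tendsto (fun n => w n x) atTop (𝓝 (wlim x))) :
    Tendsto (fun n =>
        ∫⁻ x, ENNReal.ofReal
          ((|(|w n x| ^ q - |w n x - wlim x| ^ q - |wlim x| ^ q)|) ^ (s / q)) ∂volume)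
      atTop (𝓝 0) := by
  obtain ⟨C, hC⟩ := hbound
  have hs0 : 0 < s := one_pos.trans hs
  have hq0 : 0 < q := one_pos.trans_le hq1
  simp only [← ENNReal.ofReal_rpow_of_nonneg (abs_nonneg _) hs0.le,
    ← ENNReal.ofReal_rpow_of_nonneg (abs_nonneg _) (div_pos hs0 hq0).le,
    ← Real.enorm_eq_ofReal_abs] at hC ⊢
  simpa only [Real.norm_eq_abs] using local_brezis_lieb_first_general hs0 hq0
    (fun n => (hmeas n).aestronglyMeasurable) ENNReal.ofReal_ne_top hC hae
end

section
/- Let s ∈ (1,∞) and q ∈ [1,s] be real numbers. Let (w_n) be a sequence of measurable functions from ℝ^N to ℝ (N ≥ 1) such that sup_n ∫_{ℝ^N} |w_n|^s dx < ∞, and suppose w_n converges almost everywhere on ℝ^N to a measurable function w. Then lim_{n→∞} ∫_{ℝ^N} | |w_n|^{q−1} w_n − |w_n − w|^{q−1} (w_n − w) − |w|^{q−1} w |^{s/q} dx = 0. -/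
open MeasureTheory Filter Topology

/-!
The integrand is `h (w n x, w x)` for the function `h (a, b) = |φ a - φ (a - b) - φ b| ^ (s / q)`,
`φ a = |a| ^ (q - 1) * a`, which is continuous, positively homogeneous of degree `s`, and vanishes
on the axis `b = 0` and on the diagonal `a = b`. Vanishing on the axis, homogeneity and compactness
of the unit sphere give `h (a, b) ≤ ε * |a| ^ s + K * |b| ^ s` with `K` depending on `ε`. As `w` is
in `L^s` by Fatou's lemma, the excess of the integrand over `ε * |w n| ^ s` is dominated, and it
tends to zero because `h` vanishes on the diagonal; the remaining part has integral `O(ε)`.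
-/

/-- The failure of additivity of `j` at the splitting `a = (a - b) + b` of the first coordinate of
`p = (a, b)`. At `(a, b) = (wₙ, w)` it is the expression in the Brezis–Lieb lemma. -/
def additivityDefect {E F : Type*} [AddGroup E] [AddGroup F] (j : E → F) (p : E × E) : F :=
  j p.1 - j (p.1 - p.2) - j p.2

theorem continuous_additivityDefect {E F : Type*} [AddGroup E] [TopologicalSpace E]
    [ContinuousSub E] [AddGroup F] [TopologicalSpace F] [ContinuousSub F] {j : E → F}
    (hj : Continuous j) : Continuous (additivityDefect j) := by
  unfold additivityDefect
  fun_prop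

theorem exists_le_mul_norm_rpow_add_of_mem_sphere {E F : Type*}
    [NormedAddCommGroup E] [NormedAddCommGroup F] [ProperSpace E] [ProperSpace F] {h : E × F → ℝ}
    (h_cont : Continuous h) (h_axis : ∀ a, h (a, 0) ≤ 0) {s : ℝ} (hs : 0 ≤ s) {ε : ℝ}
    (hε : 0 < ε) :
    ∃ K, ∀ p ∈ Metric.sphere (0 : E × F) 1, h p ≤ ε * ‖p.1‖ ^ s + K * ‖p.2‖ ^ s := by
  have cont_fst : Continuous fun p : E × F => ε * ‖p.1‖ ^ s :=
    (continuous_fst.norm.rpow_const fun _ => Or.inr hs).const_mul ε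
  have cont_snd : Continuous fun p : E × F => ‖p.2‖ ^ s :=
    continuous_snd.norm.rpow_const fun _ => Or.inr hs
  -- `T` is compact and, since `h ≤ 0` on the axis, disjoint from it.
  let T : Set (E × F) := Metric.sphere 0 1 ∩ {p | ε * ‖p.1‖ ^ s ≤ h p}
  have snd_pos : ∀ p ∈ T, 0 < ‖p.2‖ ^ s := by
    rintro ⟨a, b⟩ ⟨hp, hle⟩
    refine Real.rpow_pos_of_pos (norm_pos_iff.mpr ?_) s
    rintro rfl
    have norm_a : ‖a‖ = 1 := by simpa [Prod.norm_def] using hp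
    have : ε ≤ h (a, 0) := by simpa [norm_a] using hle
    exact absurd (h_axis a) (hε.trans_le this).not_ge
  have T_compact : IsCompact T :=
    (isCompact_sphere _ _).inter_right (isClosed_le cont_fst h_cont)
  obtain ⟨K, hK⟩ := T_compact.bddAbove_image (f := fun p => h p / ‖p.2‖ ^ s)
    (h_cont.continuousOn.div cont_snd.continuousOn fun p hp => (snd_pos p hp).ne')
  refine ⟨max K 0, fun p hp => ?_⟩
  rcases le_total (h p) (ε * ‖p.1‖ ^ s) with hle | hge
  · exact hle.trans (le_add_of_nonneg_right (by positivity))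
  · calc
      h p ≤ K * ‖p.2‖ ^ s :=
        (div_le_iff₀ (snd_pos p ⟨hp, hge⟩)).mp (hK ⟨p, ⟨hp, hge⟩, rfl⟩)
      _ ≤ max K 0 * ‖p.2‖ ^ s := by gcongr; exact le_max_left K 0
      _ ≤ ε * ‖p.1‖ ^ s + max K 0 * ‖p.2‖ ^ s := le_add_of_nonneg_left (by positivity)

section PosHomogeneous

variable {E F : Type*} [NormedAddCommGroup E] [NormedSpace ℝ E]
  [NormedAddCommGroup F] [NormedSpace ℝ F]

/-- Positive homogeneity of degree `r`, the property of `x ↦ ‖x‖ ^ (r - 1) • x` that drives the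
estimates. Only dilations by `c > 0` are considered, so that the value at the origin is not tied to
the convention for `0 ^ r`. -/
def PosHomogeneous (r : ℝ) (f : E → F) : Prop :=
  ∀ ⦃c : ℝ⦄, 0 < c → ∀ x, f (c • x) = c ^ r • f x

theorem posHomogeneous_norm_rpow_sub_one_smul (q : ℝ) :
    PosHomogeneous q fun x : E => ‖x‖ ^ (q - 1) • x := by
  intro c hc x
  have c_rpow_mul : c ^ (q - 1) * c = c ^ q := by
    rw [← Real.rpow_add_one hc.ne', sub_add_cancel]
  simp only [norm_smul, Real.norm_of_nonneg hc.le, Real.mul_rpow hc.le (norm_nonneg x), smul_smul]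
  rw [mul_right_comm, c_rpow_mul]

theorem continuous_norm_rpow_sub_one_smul {q : ℝ} (hq : 1 ≤ q) :
    Continuous fun x : E => ‖x‖ ^ (q - 1) • x :=
  (continuous_norm.rpow_const fun _ => Or.inr (sub_nonneg.mpr hq)).smul continuous_id

namespace PosHomogeneous

theorem map_zero {r : ℝ} {f : E → F} (hf : PosHomogeneous r f) (hr : r ≠ 0) : f 0 = 0 := by
  have two_rpow_ne_one : (2 : ℝ) ^ r ≠ 1 := by
    rwa [← Real.rpow_zero 2, Ne, Real.rpow_right_inj two_pos (by norm_num)]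
  have two_rpow_sub_one_smul : ((2 : ℝ) ^ r - 1) • f 0 = 0 := by
    rw [sub_smul, one_smul, ← hf two_pos, smul_zero, sub_self]
  exact (smul_eq_zero.mp two_rpow_sub_one_smul).resolve_left (sub_ne_zero.mpr two_rpow_ne_one)

theorem norm_rpow {r : ℝ} {f : E → F} (hf : PosHomogeneous r f) (p : ℝ) :
    PosHomogeneous (r * p) fun x => ‖f x‖ ^ p := by
  intro c hc x
  have hcr : 0 ≤ c ^ r := Real.rpow_nonneg hc.le r
  simp only [hf hc, norm_smul, Real.norm_of_nonneg hcr, smul_eq_mul]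
  rw [Real.mul_rpow hcr (norm_nonneg _), ← Real.rpow_mul hc.le]

theorem le_of_forall_mem_sphere_le {r : ℝ} {f g : E → ℝ} (hf : PosHomogeneous r f)
    (hg : PosHomogeneous r g) (le_zero : f 0 ≤ g 0) (sphere_le : ∀ x ∈ Metric.sphere 0 1, f x ≤ g x)
    (x : E) : f x ≤ g x := by
  rcases eq_or_ne x 0 with rfl | hx
  · exact le_zero
  · have hx_norm : 0 < ‖x‖ := norm_pos_iff.mpr hx
    have unit_mem : ‖x‖⁻¹ • x ∈ Metric.sphere 0 1 := by
      simpa using norm_smul_inv_norm (𝕜 := ℝ) hx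
    rw [← smul_inv_smul₀ hx_norm.ne' x, hf hx_norm, hg hx_norm]
    exact smul_le_smul_of_nonneg_left (sphere_le _ unit_mem) (by positivity)

end PosHomogeneous

theorem posHomogeneous_additivityDefect {r : ℝ} {j : E → F} (hj : PosHomogeneous r j) :
    PosHomogeneous r (additivityDefect j) := fun c hc p => by
  simp only [additivityDefect, Prod.smul_fst, Prod.smul_snd, ← smul_sub, hj hc]

theorem PosHomogeneous.exists_le_mul_norm_rpow_add [ProperSpace E] [ProperSpace F]
    {h : E × F → ℝ} {s : ℝ} (h_hom : PosHomogeneous s h) (hs : 0 < s) (h_cont : Continuous h)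
    (h_axis : ∀ a, h (a, 0) ≤ 0) {ε : ℝ} (hε : 0 < ε) :
    ∃ K, ∀ a b, h (a, b) ≤ ε * ‖a‖ ^ s + K * ‖b‖ ^ s := by
  obtain ⟨K, hK⟩ := exists_le_mul_norm_rpow_add_of_mem_sphere h_cont h_axis hs.le hε
  have bound_hom : PosHomogeneous s fun p : E × F => ε * ‖p.1‖ ^ s + K * ‖p.2‖ ^ s := by
    intro c hc p
    simp only [Prod.smul_fst, Prod.smul_snd, norm_smul, Real.norm_of_nonneg hc.le,
      Real.mul_rpow hc.le (norm_nonneg _), smul_eq_mul]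
    ring
  refine ⟨K, fun a b => h_hom.le_of_forall_mem_sphere_le bound_hom ?_ hK (a, b)⟩
  simpa [Real.zero_rpow hs.ne', Prod.mk_zero_zero] using h_axis 0

end PosHomogeneous

section Lintegral

open scoped ENNReal NNReal

variable {X ι : Type*} [MeasurableSpace X] {μ : Measure X} {l : Filter ι}
  [l.IsCountablyGenerated]

theorem tendsto_lintegral_zero_of_le_mul_add {f v : ι → X → ℝ≥0∞} {M : ℝ≥0∞} (hM : M ≠ ∞)
    (hf : ∀ i, AEMeasurable (f i) μ) (hv : ∀ i, AEMeasurable (v i) μ)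
    (v_le : ∀ i, ∫⁻ x, v i x ∂μ ≤ M)
    (f_le : ∀ ε : ℝ≥0, 0 < ε → ∃ g : X → ℝ≥0∞, ∫⁻ x, g x ∂μ ≠ ∞ ∧
      ∀ i, ∀ᵐ x ∂μ, f i x ≤ ε * v i x + g x)
    (f_lim : ∀ᵐ x ∂μ, Tendsto (fun i => f i x) l (𝓝 0)) :
    Tendsto (fun i => ∫⁻ x, f i x ∂μ) l (𝓝 0) := by
  refine ENNReal.tendsto_nhds_zero.mpr fun δ hδ => ?_
  have hδ_half : 0 < δ / 2 := ENNReal.half_pos hδ.ne'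
  obtain ⟨ε, hε, hεM⟩ := ENNReal.exists_nnreal_pos_mul_lt hM hδ_half.ne'
  obtain ⟨g, hg, f_le_g⟩ := f_le ε hε
  have excess_lim : Tendsto (fun i => ∫⁻ x, f i x - ε * v i x ∂μ) l (𝓝 0) := by
    rw [← lintegral_zero (μ := μ)]
    refine tendsto_lintegral_filter_of_dominated_convergence' g
      (.of_forall fun i => (hf i).sub ((hv i).const_mul _)) (.of_forall fun i => ?_) hg ?_
    · filter_upwards [f_le_g i] with x hx using tsub_le_iff_left.mpr hx
    · filter_upwards [f_lim] with x hx
      exact tendsto_of_tendsto_of_tendsto_of_le_of_le tendsto_const_nhds hx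
        (fun _ => zero_le) fun _ => tsub_le_self
  filter_upwards [ENNReal.tendsto_nhds_zero.mp excess_lim (δ / 2) hδ_half] with i hi
  calc
    ∫⁻ x, f i x ∂μ ≤ ∫⁻ x, (f i x - ε * v i x) + ε * v i x ∂μ :=
      lintegral_mono fun x => le_tsub_add
    _ = ∫⁻ x, f i x - ε * v i x ∂μ + ε * ∫⁻ x, v i x ∂μ := by
      rw [lintegral_add_right' _ ((hv i).const_mul _), lintegral_const_mul' _ _ ENNReal.coe_ne_top]
    _ ≤ δ / 2 + δ / 2 := by
      gcongr
      exact (mul_le_mul_right (v_le i) _).trans hεM.le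
    _ = δ := ENNReal.add_halves δ

theorem lintegral_le_of_tendsto_ae [l.NeBot] {f : ι → X → ℝ≥0∞} {g : X → ℝ≥0∞} {M : ℝ≥0∞}
    (hf : ∀ i, AEMeasurable (f i) μ) (f_le : ∀ i, ∫⁻ x, f i x ∂μ ≤ M)
    (f_lim : ∀ᵐ x ∂μ, Tendsto (fun i => f i x) l (𝓝 (g x))) :
    ∫⁻ x, g x ∂μ ≤ M :=
  calc
    ∫⁻ x, g x ∂μ = ∫⁻ x, liminf (fun i => f i x) l ∂μ :=
      lintegral_congr_ae (f_lim.mono fun _ hx => hx.liminf_eq.symm)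
    _ ≤ liminf (fun i => ∫⁻ x, f i x ∂μ) l := lintegral_liminf_le' hf
    _ ≤ liminf (fun _ => M) l := liminf_le_liminf (.of_forall f_le)
    _ = M := liminf_const M

variable {E F : Type*} [NormedAddCommGroup E] [NormedSpace ℝ E] [ProperSpace E]
  [NormedAddCommGroup F] [NormedSpace ℝ F]

theorem PosHomogeneous.tendsto_lintegral_zero [l.NeBot] {h : E × E → ℝ} {s : ℝ}
    (h_hom : PosHomogeneous s h) (hs : 0 < s) (h_cont : Continuous h)
    (h_axis : ∀ a, h (a, 0) ≤ 0) (h_diag : ∀ a, h (a, a) ≤ 0) {w : ι → X → E} {wlim : X → E}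
    (hw : ∀ i, AEStronglyMeasurable (w i) μ)
    (w_bdd : ∃ M ≠ ∞, ∀ i, ∫⁻ x, ENNReal.ofReal (‖w i x‖ ^ s) ∂μ ≤ M)
    (w_lim : ∀ᵐ x ∂μ, Tendsto (fun i => w i x) l (𝓝 (wlim x))) :
    Tendsto (fun i => ∫⁻ x, ENNReal.ofReal (h (w i x, wlim x)) ∂μ) l (𝓝 0) := by
  obtain ⟨M, hM, w_le⟩ := w_bdd
  have hwlim : AEStronglyMeasurable wlim μ := aestronglyMeasurable_of_tendsto_ae l hw w_lim
  have norm_rpow_meas : ∀ i, AEMeasurable (fun x => ENNReal.ofReal (‖w i x‖ ^ s)) μ :=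
    fun i => ((hw i).norm.aemeasurable.pow_const s).ennreal_ofReal
  have wlim_le : ∫⁻ x, ENNReal.ofReal (‖wlim x‖ ^ s) ∂μ ≤ M :=
    lintegral_le_of_tendsto_ae norm_rpow_meas w_le <| w_lim.mono fun x hx =>
      ENNReal.tendsto_ofReal (hx.norm.rpow_const (Or.inr hs.le))
  refine tendsto_lintegral_zero_of_le_mul_add hM (fun i => ?_) norm_rpow_meas w_le
    (fun ε hε => ?_) ?_
  · exact (h_cont.comp_aestronglyMeasurable ((hw i).prodMk hwlim)).aemeasurable.ennreal_ofReal
  · obtain ⟨K, hK⟩ := h_hom.exists_le_mul_norm_rpow_add hs h_cont h_axis (NNReal.coe_pos.mpr hε)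
    refine ⟨fun x => ENNReal.ofReal K * ENNReal.ofReal (‖wlim x‖ ^ s), ?_, fun i =>
      .of_forall fun x => ?_⟩
    · rw [lintegral_const_mul' _ _ ENNReal.ofReal_ne_top]
      exact ENNReal.mul_ne_top ENNReal.ofReal_ne_top (ne_top_of_le_ne_top hM wlim_le)
    · beta_reduce
      rw [← ENNReal.ofReal_coe_nnreal, ← ENNReal.ofReal_mul' (by positivity),
        ← ENNReal.ofReal_mul' (by positivity)]
      exact (ENNReal.ofReal_le_ofReal (hK _ _)).trans ENNReal.ofReal_add_le
  · filter_upwards [w_lim] with x hx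
    rw [← ENNReal.ofReal_of_nonpos (h_diag (wlim x))]
    exact ENNReal.tendsto_ofReal ((h_cont.tendsto _).comp (hx.prodMk_nhds tendsto_const_nhds))

theorem local_brezis_lieb_second_general [l.NeBot] {j : E → F} {q s : ℝ} (hq : 0 < q) (hs : 0 < s)
    (j_hom : PosHomogeneous q j) (j_cont : Continuous j) {w : ι → X → E} {wlim : X → E}
    (hw : ∀ i, AEStronglyMeasurable (w i) μ)
    (w_bdd : ∃ M ≠ ∞, ∀ i, ∫⁻ x, ENNReal.ofReal (‖w i x‖ ^ s) ∂μ ≤ M)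
    (w_lim : ∀ᵐ x ∂μ, Tendsto (fun i => w i x) l (𝓝 (wlim x))) :
    Tendsto (fun i => ∫⁻ x, ENNReal.ofReal
      (‖j (w i x) - j (w i x - wlim x) - j (wlim x)‖ ^ (s / q)) ∂μ) l (𝓝 0) := by
  have hsq : 0 < s / q := div_pos hs hq
  have j_zero : j 0 = 0 := j_hom.map_zero hq.ne'
  have h_hom : PosHomogeneous s fun p => ‖additivityDefect j p‖ ^ (s / q) := by
    simpa only [mul_div_cancel₀ s hq.ne'] using
      (posHomogeneous_additivityDefect j_hom).norm_rpow (s / q)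
  have h_cont : Continuous fun p => ‖additivityDefect j p‖ ^ (s / q) :=
    (continuous_additivityDefect j_cont).norm.rpow_const fun _ => Or.inr hsq.le
  refine h_hom.tendsto_lintegral_zero hs h_cont (fun a => ?_) (fun a => ?_) hw w_bdd w_lim <;>
    simp [additivityDefect, j_zero, Real.zero_rpow hsq.ne']

end Lintegral

/-- Local Brezis–Lieb lemma, second identity (Lemma 3.3 of the paper). -/
theorem local_brezis_lieb_second
    (N : ℕ) (hN : 1 ≤ N) (s q : ℝ) (hs : 1 < s) (hq1 : 1 ≤ q) (hqs : q ≤ s)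
    (w : ℕ → EuclideanSpace ℝ (Fin N) → ℝ) (wlim : EuclideanSpace ℝ (Fin N) → ℝ)
    (hmeas : ∀ n, Measurable (w n)) (hwmeas : Measurable wlim)
    (hbound : ∃ C : ℝ, ∀ n,
      ∫⁻ x, ENNReal.ofReal (|w n x| ^ s) ∂volume ≤ ENNReal.ofReal C)
    (hae : ∀ᵐ x ∂(volume : Measure (EuclideanSpace ℝ (Fin N))),
      Tendsto (fun n => w n x) atTop (𝓝 (wlim x))) :
    Tendsto (fun n =>
        ∫⁻ x, ENNReal.ofReal
          ((|(|w n x| ^ (q - 1) * w n x - |w n x - wlim x| ^ (q - 1) * (w n x - wlim x)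
              - |wlim x| ^ (q - 1) * wlim x)|) ^ (s / q)) ∂volume)
      atTop (𝓝 0) := by
  obtain ⟨C, hC⟩ := hbound
  exact local_brezis_lieb_second_general (j := fun a : ℝ => |a| ^ (q - 1) * a) (by linarith)
    (by linarith) (posHomogeneous_norm_rpow_sub_one_smul q) (continuous_norm_rpow_sub_one_smul hq1)
    (fun n => (hmeas n).aestronglyMeasurable) ⟨_, ENNReal.ofReal_ne_top, hC⟩ hae
end

section
/- Let N ≥ 3 be an integer, α ∈ (0,N) and p ∈ [1, 2N/(N+α)) be real numbers. Let (u_n) be a sequence of measurable functions from ℝ^N to ℝ with sup_n ∫_{ℝ^N} |u_n|^{2Np/(N+α)} dx < ∞, converging almost everywhere on ℝ^N to a measurable function u. Then lim_{n→∞} ∫_{ℝ^N} | ∫_{ℝ^N} ( |u_n(y)|^p |u_n(x)|^p − |u_n(y) − u(y)|^p |u_n(x) − u(x)|^p − |u(y)|^p |u(x)|^p ) · |x − y|^{α−N} dy | dx = 0. -/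
open MeasureTheory Filter Topology

/-!
Write `|a| ^ p = |a - b| ^ p + |b| ^ p + e` with `e` the defect of additivity. Expanding the
two-point expression leaves only products that contain a defect and the cross products of
`|uₙ - u| ^ p` with `|u| ^ p`. Set `r = 2N / (N + α)`. The defects tend to `0` in `L^r` by the
classical Brezis–Lieb argument, so the Hardy–Littlewood–Sobolev inequality disposes of the first
kind. In the cross products `|uₙ - u| ^ p` is bounded in `L^r` and tends to `0` almost everywhere,
hence it tends to `0` weakly against `I_α * |u| ^ p`, which lies in the dual space `L^{r'}`.

For normalised `f` and `g` the Hardy–Littlewood–Sobolev inequality follows from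
`a * b ≤ a * min a b + b * min b a`: bounding `min (f x) (g y)` by `f x` for `y` near `x` and by
`g y` elsewhere gives `∫ min (f x) (g y) |x - y| ^ (α - N) dy ≤ C * f x ^ (r - 1)`.
-/

open Module (finrank)
open scoped ENNReal NNReal

section LebesgueNorm

variable {Ω : Type*} [MeasurableSpace Ω] {ν : Measure Ω}

lemma exists_ae_eq_mul_and_lintegral_rpow_le_one {r : ℝ} (hr : 0 < r) {f : Ω → ℝ≥0∞}
    (hf : AEMeasurable f ν) (hf_fin : ∫⁻ x, f x ^ r ∂ν ≠ ∞) :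
    ∃ g : Ω → ℝ≥0∞, AEMeasurable g ν ∧ ∫⁻ x, g x ^ r ∂ν ≤ 1 ∧
      f =ᵐ[ν] fun x => (∫⁻ y, f y ^ r ∂ν) ^ (1 / r) * g x := by
  by_cases hf0 : ∫⁻ x, f x ^ r ∂ν = 0
  · refine ⟨0, aemeasurable_const, by simp [hr], ?_⟩
    simp only [Pi.zero_apply, mul_zero]
    exact ENNReal.ae_eq_zero_of_lintegral_rpow_eq_zero hr.le hf hf0
  · refine ⟨ENNReal.funMulInvSnorm f r ν, hf.mul_const _,
      (ENNReal.lintegral_rpow_funMulInvSnorm_eq_one hr hf0 hf_fin).le, .of_forall fun x => ?_⟩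
    dsimp only
    rw [mul_comm]
    exact ENNReal.fun_eq_funMulInvSnorm_mul_eLpNorm f hf0 hf_fin

lemma exists_measurable_le_lt_lintegral_ne_top [SigmaFinite ν] {H : Ω → ℝ≥0∞} {c : ℝ≥0∞}
    (hc : c < ∫⁻ x, H x ∂ν) :
    ∃ φ : Ω → ℝ≥0∞, Measurable φ ∧ (∀ x, φ x ≤ H x) ∧ ∫⁻ x, φ x ∂ν ≠ ∞ ∧ c < ∫⁻ x, φ x ∂ν := by
  simp_rw [lintegral_eq_nnreal, lt_iSup_iff] at hc
  obtain ⟨ψ, hψH, hcψ⟩ := hc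
  rw [← SimpleFunc.lintegral_eq_lintegral] at hcψ
  obtain ⟨φ, hφψ, hφ_fin, hcφ⟩ := SimpleFunc.exists_lt_lintegral_simpleFunc_of_lt_lintegral hcψ
  exact ⟨fun x => φ x, by fun_prop,
    fun x => (ENNReal.coe_le_coe.2 (hφψ x)).trans (hψH x), hφ_fin.ne, hcφ⟩

lemma lintegral_rpow_le_of_forall_lintegral_mul_le [SigmaFinite ν] {r s : ℝ}
    (hrs : r.HolderConjugate s) {H : Ω → ℝ≥0∞} {C : ℝ≥0∞}
    (hC : ∀ f : Ω → ℝ≥0∞, Measurable f → ∫⁻ x, f x ^ r ∂ν ≠ ∞ →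
      ∫⁻ x, f x * H x ∂ν ≤ C * (∫⁻ x, f x ^ r ∂ν) ^ (1 / r)) :
    ∫⁻ x, H x ^ s ∂ν ≤ C ^ s := by
  refine le_of_forall_lt fun c hc => ?_
  obtain ⟨φ, hφ, hφH, hφ_fin, hcφ⟩ := exists_measurable_le_lt_lintegral_ne_top hc
  set J := ∫⁻ x, φ x ∂ν
  have hJ0 : J ≠ 0 := (zero_le.trans_lt hcφ).ne'
  have hsum : 1 / r + 1 / s = 1 := by simpa using hrs.inv_add_inv_eq_one
  have hr0 : 0 ≤ 1 / r := one_div_nonneg.2 hrs.nonneg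
  have hs0 : 0 ≤ 1 / s := one_div_nonneg.2 hrs.symm.nonneg
  have hpow : ∀ x, (φ x ^ (1 / r)) ^ r = φ x := fun x => by
    rw [← ENNReal.rpow_mul, one_div_mul_cancel hrs.ne_zero, ENNReal.rpow_one]
  have htest : J ≤ C * J ^ (1 / r) :=
    calc J = ∫⁻ x, φ x ^ (1 / r) * φ x ^ (1 / s) ∂ν := lintegral_congr fun x => by
            rw [← ENNReal.rpow_add_of_nonneg _ _ hr0 hs0, hsum, ENNReal.rpow_one]
      _ ≤ ∫⁻ x, φ x ^ (1 / r) * H x ∂ν := by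
            gcongr with x
            rw [one_div]
            exact (ENNReal.rpow_inv_le_iff hrs.symm.pos).2 (hφH x)
      _ ≤ C * J ^ (1 / r) := by
            simpa only [hpow] using hC _ (hφ.pow_const (1 / r)) (by simpa only [hpow] using hφ_fin)
  have hroot : J ^ (1 / s) ≤ C := by
    have hJr0 : J ^ (1 / r) ≠ 0 := by simp [hJ0, hφ_fin]
    have hJr_fin : J ^ (1 / r) ≠ ∞ := ENNReal.rpow_ne_top_of_nonneg hr0 hφ_fin
    rwa [← ENNReal.mul_le_mul_iff_left hJr0 hJr_fin,
      ← ENNReal.rpow_add_of_nonneg _ _ hs0 hr0, add_comm, hsum, ENNReal.rpow_one]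
  exact hcφ.trans_le <| (ENNReal.rpow_inv_le_iff hrs.symm.pos).1 (by rwa [← one_div])

/- Dominated convergence applies to `f n - ε • G n`, and what is left is at most `ε * M`. -/
lemma tendsto_lintegral_zero_of_forall_exists_le_mul_add {f G : ℕ → Ω → ℝ≥0∞} {M : ℝ≥0∞}
    (hf : ∀ n, AEMeasurable (f n) ν) (hG : ∀ n, AEMeasurable (G n) ν) (hM : M ≠ ∞)
    (hGM : ∀ n, ∫⁻ x, G n x ∂ν ≤ M)
    (hdom : ∀ ε : ℝ≥0, 0 < ε → ∃ D : Ω → ℝ≥0∞, ∫⁻ x, D x ∂ν ≠ ∞ ∧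
      ∀ n, ∀ᵐ x ∂ν, f n x ≤ ε * G n x + D x)
    (hlim : ∀ᵐ x ∂ν, Tendsto (f · x) atTop (𝓝 0)) :
    Tendsto (fun n => ∫⁻ x, f n x ∂ν) atTop (𝓝 0) := by
  refine ENNReal.tendsto_nhds_zero.2 fun δ hδ => ?_
  have hδ2 : δ / 2 ≠ 0 := (ENNReal.half_pos hδ.ne').ne'
  obtain ⟨ε, hε, hεM⟩ := ENNReal.exists_nnreal_pos_mul_lt hM hδ2
  obtain ⟨D, hD, hfD⟩ := hdom ε hε
  have hexcess : Tendsto (fun n => ∫⁻ x, f n x - ε * G n x ∂ν) atTop (𝓝 0) := by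
    rw [← lintegral_zero (μ := ν)]
    refine tendsto_lintegral_of_dominated_convergence' D
      (fun n => (hf n).sub ((hG n).const_mul _)) (fun n => ?_) hD ?_
    · exact (hfD n).mono fun x hx => tsub_le_iff_left.2 hx
    · exact hlim.mono fun x hx => tendsto_of_tendsto_of_tendsto_of_le_of_le
        tendsto_const_nhds hx (fun n => zero_le) fun n => tsub_le_self
  filter_upwards [ENNReal.tendsto_nhds_zero.1 hexcess (δ / 2) (pos_iff_ne_zero.2 hδ2)] with n hn
  calc ∫⁻ x, f n x ∂ν ≤ ∫⁻ x, ((f n x - ε * G n x) + ε * G n x) ∂ν := by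
        gcongr; exact le_tsub_add
    _ = ∫⁻ x, f n x - ε * G n x ∂ν + ε * ∫⁻ x, G n x ∂ν := by
        rw [lintegral_add_right' _ ((hG n).const_mul _), lintegral_const_mul'' _ (hG n)]
    _ ≤ δ / 2 + δ / 2 := by
        gcongr
        exact (mul_le_mul_right (hGM n) _).trans hεM.le
    _ = δ := ENNReal.add_halves δ

lemma exists_mul_le_mul_rpow_add {r s : ℝ} (hrs : r.HolderConjugate s) {ε : ℝ≥0} (hε : 0 < ε) :
    ∃ C : ℝ≥0, ∀ a b : ℝ≥0∞, a * b ≤ ε * a ^ r + C * b ^ s := by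
  set lam := ε ^ (1 / r)
  have hlam : lam ≠ 0 := by positivity
  refine ⟨lam⁻¹ ^ s, fun a b => ?_⟩
  have hlam_rpow : (lam : ℝ≥0∞) ^ r = ε := by
    rw [← ENNReal.coe_rpow_of_nonneg _ hrs.nonneg, ← NNReal.rpow_mul,
      one_div_mul_cancel hrs.ne_zero, NNReal.rpow_one]
  calc a * b = (lam * a) * ((lam⁻¹ : ℝ≥0) * b) := by
        rw [mul_mul_mul_comm, ← ENNReal.coe_mul, mul_inv_cancel₀ hlam, ENNReal.coe_one, one_mul]
    _ ≤ (lam * a) ^ r + ((lam⁻¹ : ℝ≥0) * b) ^ s := by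
        refine (ENNReal.young_inequality _ _ hrs).trans ?_
        gcongr <;> refine ENNReal.div_le_of_le_mul (le_mul_of_one_le_right' ?_)
        · exact ENNReal.one_le_ofReal.2 hrs.lt.le
        · exact ENNReal.one_le_ofReal.2 hrs.symm.lt.le
    _ = ε * a ^ r + (lam⁻¹ ^ s : ℝ≥0) * b ^ s := by
        rw [ENNReal.mul_rpow_of_nonneg _ _ hrs.nonneg, hlam_rpow,
          ENNReal.mul_rpow_of_nonneg _ _ hrs.symm.nonneg,
          ENNReal.coe_rpow_of_nonneg _ hrs.symm.nonneg]

lemma tendsto_lintegral_mul_zero_of_ae_tendsto_zero {r s : ℝ} (hrs : r.HolderConjugate s)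
    {g : ℕ → Ω → ℝ≥0∞} {H : Ω → ℝ≥0∞} {M : ℝ≥0∞} (hg : ∀ n, AEMeasurable (g n) ν)
    (hH : AEMeasurable H ν) (hM : M ≠ ∞) (hgM : ∀ n, ∫⁻ x, g n x ^ r ∂ν ≤ M)
    (hH_fin : ∫⁻ x, H x ^ s ∂ν ≠ ∞) (hlim : ∀ᵐ x ∂ν, Tendsto (g · x) atTop (𝓝 0)) :
    Tendsto (fun n => ∫⁻ x, g n x * H x ∂ν) atTop (𝓝 0) := by
  have hH_top : ∀ᵐ x ∂ν, H x ≠ ∞ := by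
    filter_upwards [ae_lt_top' (hH.pow_const s) hH_fin] with x hx
    exact ((ENNReal.rpow_lt_top_iff_of_pos hrs.symm.pos).1 hx).ne
  refine tendsto_lintegral_zero_of_forall_exists_le_mul_add (fun n => (hg n).mul hH)
    (fun n => (hg n).pow_const r) hM hgM (fun ε hε => ?_) ?_
  · obtain ⟨C, hC⟩ := exists_mul_le_mul_rpow_add hrs hε
    refine ⟨fun x => C * H x ^ s, ?_, fun n => .of_forall fun x => hC _ _⟩
    rw [lintegral_const_mul'' _ (hH.pow_const s)]
    finiteness
  · filter_upwards [hlim, hH_top] with x hx hHx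
    simpa using ENNReal.Tendsto.mul_const hx (.inr hHx)

end LebesgueNorm

section BrezisLieb

lemma exists_abs_rpow_sub_rpow_le {p : ℝ} (hp : 0 < p) {ε : ℝ} (hε : 0 < ε) :
    ∃ C, 0 ≤ C ∧ ∀ x t b : ℝ, 0 ≤ x → 0 ≤ t → |x - t| ≤ b →
      |x ^ p - t ^ p| ≤ ε * t ^ p + C * b ^ p := by
  obtain ⟨δ, hδ, hclose⟩ : ∃ δ > 0, ∀ z : ℝ, |z - 1| < δ → |z ^ p - 1| < ε := by
    have hcont : ContinuousAt (fun z : ℝ => z ^ p) 1 :=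
      Real.continuousAt_rpow_const 1 p (.inr hp.le)
    simpa [Real.dist_eq] using Metric.continuousAt_iff.1 hcont ε hε
  refine ⟨(1 + δ⁻¹) ^ p, by positivity, fun x t b hx ht hxt => ?_⟩
  have hb : 0 ≤ b := (abs_nonneg _).trans hxt
  obtain hbt | htb := lt_or_ge b (δ * t)
  · have ht0 : 0 < t := pos_of_mul_pos_right (hb.trans_lt hbt) hδ.le
    have hquot : |x / t - 1| < δ := by
      rw [div_sub_one ht0.ne', abs_div, abs_of_pos ht0, div_lt_iff₀ ht0]
      exact hxt.trans_lt hbt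
    calc |x ^ p - t ^ p| = |(x / t) ^ p - 1| * t ^ p := by
          rw [← abs_of_pos (Real.rpow_pos_of_pos ht0 p), ← abs_mul, sub_mul,
            abs_of_pos (Real.rpow_pos_of_pos ht0 p), ← Real.mul_rpow (by positivity) ht,
            div_mul_cancel₀ _ ht0.ne', one_mul]
      _ ≤ ε * t ^ p := by gcongr; exact (hclose _ hquot).le
      _ ≤ ε * t ^ p + (1 + δ⁻¹) ^ p * b ^ p := le_add_of_nonneg_right (by positivity)
  · have htb' : t ≤ δ⁻¹ * b := (le_inv_mul_iff₀ hδ).2 htb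
    have hxb : x ≤ (1 + δ⁻¹) * b := by linarith [le_abs_self (x - t)]
    calc |x ^ p - t ^ p| ≤ ((1 + δ⁻¹) * b) ^ p := by
          refine abs_sub_le_of_nonneg_of_le (by positivity) ?_ (by positivity) ?_
          · exact Real.rpow_le_rpow hx hxb hp.le
          · exact Real.rpow_le_rpow ht (by linarith) hp.le
      _ = (1 + δ⁻¹) ^ p * b ^ p := Real.mul_rpow (by positivity) hb
      _ ≤ ε * t ^ p + (1 + δ⁻¹) ^ p * b ^ p := le_add_of_nonneg_left (by positivity)

variable {Ω F : Type*} [MeasurableSpace Ω] {ν : Measure Ω} [NormedAddCommGroup F]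

/-- The amount by which `‖·‖ ^ p` fails to be additive on the splitting `a = (a - b) + b`; the
Brezis–Lieb lemma says that it vanishes asymptotically along `a = u n x`, `b = v x`. -/
noncomputable def brezisLiebDefect (p : ℝ) (a b : F) : ℝ := ‖a‖ ^ p - ‖a - b‖ ^ p - ‖b‖ ^ p

lemma exists_abs_brezisLiebDefect_le {p : ℝ} (hp : 0 < p) {ε : ℝ} (hε : 0 < ε) :
    ∃ C, 0 ≤ C ∧ ∀ a b : F, |brezisLiebDefect p a b| ≤ ε * ‖a - b‖ ^ p + C * ‖b‖ ^ p := by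
  obtain ⟨C, hC, hbound⟩ := exists_abs_rpow_sub_rpow_le hp hε
  refine ⟨C + 1, by positivity, fun a b => ?_⟩
  have hdiff : |‖a‖ - ‖a - b‖| ≤ ‖b‖ := by simpa using abs_norm_sub_norm_le a (a - b)
  calc |brezisLiebDefect p a b| ≤ |‖a‖ ^ p - ‖a - b‖ ^ p| + |‖b‖ ^ p| := abs_sub _ _
    _ ≤ (ε * ‖a - b‖ ^ p + C * ‖b‖ ^ p) + ‖b‖ ^ p := by
        rw [abs_of_nonneg (by positivity : 0 ≤ ‖b‖ ^ p)]
        gcongr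
        exact hbound _ _ _ (norm_nonneg _) (norm_nonneg _) hdiff
    _ = ε * ‖a - b‖ ^ p + (C + 1) * ‖b‖ ^ p := by ring

lemma enorm_norm_rpow {p : ℝ} (hp : 0 ≤ p) (a : F) : ‖‖a‖ ^ p‖ₑ = ‖a‖ₑ ^ p := by
  rw [Real.enorm_rpow_of_nonneg (norm_nonneg a) hp, enorm_norm]

lemma exists_enorm_brezisLiebDefect_rpow_le {p r : ℝ} (hp : 0 < p) (hr : 0 < r) {ε : ℝ≥0}
    (hε : 0 < ε) :
    ∃ C : ℝ≥0, ∀ a b : F, ‖brezisLiebDefect p a b‖ₑ ^ r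
      ≤ ε * ‖a - b‖ₑ ^ (p * r) + C * ‖b‖ₑ ^ (p * r) := by
  set η := ε ^ (1 / r) / 2
  obtain ⟨C, hC, hbound⟩ := exists_abs_brezisLiebDefect_le (F := F) hp
    (NNReal.coe_pos.2 (by positivity : 0 < η))
  lift C to ℝ≥0 using hC
  refine ⟨(2 * C) ^ r, fun a b => ?_⟩
  have hη : 2 ^ r * (η : ℝ≥0∞) ^ r = ε := by
    rw [← ENNReal.mul_rpow_of_nonneg _ _ hr.le, ← ENNReal.coe_two, ← ENNReal.coe_mul,
      mul_div_cancel₀ _ two_ne_zero, ← ENNReal.coe_rpow_of_nonneg _ hr.le, ← NNReal.rpow_mul,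
      one_div_mul_cancel hr.ne', NNReal.rpow_one]
  have henorm : ‖brezisLiebDefect p a b‖ₑ ≤ η * ‖a - b‖ₑ ^ p + C * ‖b‖ₑ ^ p := by
    calc ‖brezisLiebDefect p a b‖ₑ ≤ ‖η * ‖a - b‖ ^ p + C * ‖b‖ ^ p‖ₑ :=
          enorm_le_iff_norm_le.2 ((hbound a b).trans (le_abs_self _))
      _ ≤ ‖η * ‖a - b‖ ^ p‖ₑ + ‖C * ‖b‖ ^ p‖ₑ := enorm_add_le _ _
      _ = η * ‖a - b‖ₑ ^ p + C * ‖b‖ₑ ^ p := by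
          simp only [enorm_mul, enorm_norm_rpow hp.le, Real.enorm_of_nonneg NNReal.zero_le_coe,
            ENNReal.ofReal_coe_nnreal]
  calc ‖brezisLiebDefect p a b‖ₑ ^ r ≤ (η * ‖a - b‖ₑ ^ p + C * ‖b‖ₑ ^ p) ^ r := by gcongr
    _ ≤ 2 ^ r * ((η * ‖a - b‖ₑ ^ p) ^ r + (C * ‖b‖ₑ ^ p) ^ r) :=
      ENNReal.add_rpow_le_two_rpow_mul_rpow_add_rpow _ _ hr.le
    _ = ε * ‖a - b‖ₑ ^ (p * r) + ((2 * C) ^ r : ℝ≥0) * ‖b‖ₑ ^ (p * r) := by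
      rw [ENNReal.mul_rpow_of_nonneg _ _ hr.le, ENNReal.mul_rpow_of_nonneg _ _ hr.le, mul_add,
        ← mul_assoc, hη, ← mul_assoc, ← ENNReal.mul_rpow_of_nonneg _ _ hr.le, ENNReal.rpow_mul,
        ENNReal.rpow_mul, ENNReal.coe_rpow_of_nonneg _ hr.le, ENNReal.coe_mul, ENNReal.coe_two]

lemma lintegral_enorm_rpow_le_of_ae_tendsto {q : ℝ} {u : ℕ → Ω → F} {v : Ω → F}
    {M : ℝ≥0∞} (hu : ∀ n, AEStronglyMeasurable (u n) ν) (hM : ∀ n, ∫⁻ x, ‖u n x‖ₑ ^ q ∂ν ≤ M)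
    (hlim : ∀ᵐ x ∂ν, Tendsto (u · x) atTop (𝓝 (v x))) : ∫⁻ x, ‖v x‖ₑ ^ q ∂ν ≤ M :=
  calc ∫⁻ x, ‖v x‖ₑ ^ q ∂ν = ∫⁻ x, liminf (fun n => ‖u n x‖ₑ ^ q) atTop ∂ν :=
        lintegral_congr_ae <| hlim.mono fun _ hx =>
          (hx.enorm.ennrpow_const q).liminf_eq.symm
    _ ≤ liminf (fun n => ∫⁻ x, ‖u n x‖ₑ ^ q ∂ν) atTop :=
        lintegral_liminf_le' fun n => (hu n).enorm.pow_const q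
    _ ≤ M := liminf_le_of_frequently_le' (.of_forall hM)

lemma lintegral_enorm_sub_rpow_le_of_ae_tendsto {q : ℝ} (hq : 0 ≤ q) {u : ℕ → Ω → F} {v : Ω → F}
    {M : ℝ≥0∞} (hu : ∀ n, AEStronglyMeasurable (u n) ν) (hM : ∀ n, ∫⁻ x, ‖u n x‖ₑ ^ q ∂ν ≤ M)
    (hlim : ∀ᵐ x ∂ν, Tendsto (u · x) atTop (𝓝 (v x))) (n : ℕ) :
    ∫⁻ x, ‖u n x - v x‖ₑ ^ q ∂ν ≤ 2 ^ q * (M + M) :=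
  calc ∫⁻ x, ‖u n x - v x‖ₑ ^ q ∂ν ≤ ∫⁻ x, 2 ^ q * (‖u n x‖ₑ ^ q + ‖v x‖ₑ ^ q) ∂ν := by
        gcongr with x
        exact (ENNReal.rpow_le_rpow enorm_sub_le hq).trans
          (ENNReal.add_rpow_le_two_rpow_mul_rpow_add_rpow _ _ hq)
    _ = 2 ^ q * (∫⁻ x, ‖u n x‖ₑ ^ q ∂ν + ∫⁻ x, ‖v x‖ₑ ^ q ∂ν) := by
        rw [lintegral_const_mul' _ _ (by finiteness),
          lintegral_add_left' ((hu n).enorm.pow_const q)]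
    _ ≤ 2 ^ q * (M + M) := by
        gcongr
        exacts [hM n, lintegral_enorm_rpow_le_of_ae_tendsto hu hM hlim]

lemma tendsto_brezisLiebDefect_zero {ι : Type*} {l : Filter ι} {p : ℝ} (hp : 0 < p)
    {a : ι → F} {b : F} (hab : Tendsto a l (𝓝 b)) :
    Tendsto (fun i => brezisLiebDefect p (a i) b) l (𝓝 0) := by
  have hcont : Continuous fun c : F => brezisLiebDefect p c b := by
    unfold brezisLiebDefect
    fun_prop (disch := exact hp.le)
  simpa [brezisLiebDefect, Function.comp_def, Real.zero_rpow hp.ne']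
    using (hcont.tendsto b).comp hab

lemma aestronglyMeasurable_brezisLiebDefect {p : ℝ} (hp : 0 ≤ p) {f g : Ω → F}
    (hf : AEStronglyMeasurable f ν) (hg : AEStronglyMeasurable g ν) :
    AEStronglyMeasurable (fun x => brezisLiebDefect p (f x) (g x)) ν := by
  have hcont : Continuous fun z : F × F => brezisLiebDefect p z.1 z.2 := by
    unfold brezisLiebDefect
    fun_prop (disch := exact hp)
  exact hcont.comp_aestronglyMeasurable (hf.prodMk hg)

theorem tendsto_lintegral_brezisLiebDefect_rpow {p r : ℝ} (hp : 0 < p) (hr : 0 < r)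
    {u : ℕ → Ω → F} {v : Ω → F} {M : ℝ≥0∞} (hu : ∀ n, AEStronglyMeasurable (u n) ν)
    (hM : M ≠ ∞) (hbound : ∀ n, ∫⁻ x, ‖u n x‖ₑ ^ (p * r) ∂ν ≤ M)
    (hlim : ∀ᵐ x ∂ν, Tendsto (u · x) atTop (𝓝 (v x))) :
    Tendsto (fun n => ∫⁻ x, ‖brezisLiebDefect p (u n x) (v x)‖ₑ ^ r ∂ν) atTop (𝓝 0) := by
  have hq : 0 ≤ p * r := by positivity
  have hv : AEStronglyMeasurable v ν := aestronglyMeasurable_of_tendsto_ae atTop hu hlim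
  refine tendsto_lintegral_zero_of_forall_exists_le_mul_add
    (fun n => (aestronglyMeasurable_brezisLiebDefect hp.le (hu n) hv).enorm.pow_const r)
    (fun n => ((hu n).sub hv).enorm.pow_const (p * r)) (by finiteness)
    (lintegral_enorm_sub_rpow_le_of_ae_tendsto hq hu hbound hlim) (fun ε hε => ?_) ?_
  · obtain ⟨C, hC⟩ := exists_enorm_brezisLiebDefect_rpow_le (F := F) hp hr hε
    refine ⟨fun x => C * ‖v x‖ₑ ^ (p * r), ?_, fun n => .of_forall fun x => hC _ _⟩
    rw [lintegral_const_mul' _ _ ENNReal.coe_ne_top]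
    have := lintegral_enorm_rpow_le_of_ae_tendsto hu hbound hlim
    exact ENNReal.mul_ne_top ENNReal.coe_ne_top (ne_top_of_le_ne_top hM this)
  · filter_upwards [hlim] with x hx
    simpa [hr] using (tendsto_brezisLiebDefect_zero hp hx).enorm.ennrpow_const r

end BrezisLieb

section RieszKernel

variable {E : Type*} [NormedAddCommGroup E] [NormedSpace ℝ E]

/-- The Riesz kernel `‖z‖ ^ (α - d)` of order `α` on a `d`-dimensional space, without its
normalising constant. For `α ≠ d` its value at the origin is the junk value `0` of `Real.rpow`
rather than `∞`. -/
noncomputable def rieszKernel (α : ℝ) (z : E) : ℝ≥0∞ :=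
  ENNReal.ofReal (‖z‖ ^ (α - finrank ℝ E))

lemma rieszKernel_sub_comm (α : ℝ) (x y : E) : rieszKernel α (x - y) = rieszKernel α (y - x) := by
  rw [rieszKernel, rieszKernel, norm_sub_rev]

lemma rieszKernel_smul (α : ℝ) {R : ℝ} (hR : 0 < R) (z : E) :
    rieszKernel α (R • z) = ENNReal.ofReal (R ^ (α - finrank ℝ E)) * rieszKernel α z := by
  rw [rieszKernel, rieszKernel, norm_smul, Real.norm_of_nonneg hR.le,
    Real.mul_rpow hR.le (norm_nonneg z), ENNReal.ofReal_mul (by positivity)]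

lemma rieszKernel_rpow (α : ℝ) {q : ℝ} (hq : 0 ≤ q) (z : E) :
    rieszKernel α z ^ q = rieszKernel (finrank ℝ E + q * (α - finrank ℝ E)) z := by
  rw [rieszKernel, rieszKernel, ENNReal.ofReal_rpow_of_nonneg (by positivity) hq,
    ← Real.rpow_mul (norm_nonneg z), add_sub_cancel_left, mul_comm]

variable [MeasurableSpace E] [BorelSpace E]

@[fun_prop]
lemma measurable_rieszKernel (α : ℝ) : Measurable (rieszKernel α : E → ℝ≥0∞) := by
  unfold rieszKernel
  fun_prop

variable [FiniteDimensional ℝ E] (μ : Measure E) [μ.IsAddHaarMeasure]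

lemma setLIntegral_rieszKernel_eq_preimage_smul (α : ℝ) {R : ℝ} (hR : 0 < R) {s : Set E}
    (hs : MeasurableSet s) :
    ∫⁻ z in s, rieszKernel α z ∂μ
      = ENNReal.ofReal (R ^ α) * ∫⁻ z in (R • ·) ⁻¹' s, rieszKernel α z ∂μ := by
  have hmap : μ = ENNReal.ofReal (R ^ finrank ℝ E) • μ.map (R • ·) := by
    rw [Measure.map_addHaar_smul μ hR.ne', smul_smul, ← ENNReal.ofReal_mul (by positivity),
      abs_of_pos (by positivity), mul_inv_cancel₀ (by positivity), ENNReal.ofReal_one, one_smul]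
  calc ∫⁻ z in s, rieszKernel α z ∂μ
      = ENNReal.ofReal (R ^ finrank ℝ E) * ∫⁻ z in s, rieszKernel α z ∂(μ.map (R • ·)) := by
        conv_lhs => rw [hmap]
        rw [Measure.restrict_smul, lintegral_smul_measure, smul_eq_mul]
    _ = ENNReal.ofReal (R ^ finrank ℝ E) * (ENNReal.ofReal (R ^ (α - finrank ℝ E)) *
          ∫⁻ z in (R • ·) ⁻¹' s, rieszKernel α z ∂μ) := by
        rw [setLIntegral_map hs (measurable_rieszKernel α) (measurable_const_smul R)]
        simp_rw [rieszKernel_smul α hR]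
        rw [lintegral_const_mul _ (measurable_rieszKernel α)]
    _ = ENNReal.ofReal (R ^ α) * ∫⁻ z in (R • ·) ⁻¹' s, rieszKernel α z ∂μ := by
        rw [← mul_assoc, ← ENNReal.ofReal_mul (by positivity), ← Real.rpow_natCast,
          ← Real.rpow_add hR, add_sub_cancel]

lemma setLIntegral_ball_rieszKernel (α : ℝ) {R : ℝ} (hR : 0 < R) :
    ∫⁻ z in Metric.ball 0 R, rieszKernel α z ∂μ
      = ENNReal.ofReal (R ^ α) * ∫⁻ z in Metric.ball 0 1, rieszKernel α z ∂μ := by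
  rw [setLIntegral_rieszKernel_eq_preimage_smul μ α hR measurableSet_ball,
    show (R • · : E → E) ⁻¹' Metric.ball 0 R = Metric.ball 0 1 by
      ext z; simp [norm_smul, abs_of_pos hR, hR]]

lemma setLIntegral_compl_ball_rieszKernel (α : ℝ) {R : ℝ} (hR : 0 < R) :
    ∫⁻ z in (Metric.ball 0 R)ᶜ, rieszKernel α z ∂μ
      = ENNReal.ofReal (R ^ α) * ∫⁻ z in (Metric.ball 0 1)ᶜ, rieszKernel α z ∂μ := by
  rw [setLIntegral_rieszKernel_eq_preimage_smul μ α hR measurableSet_ball.compl,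
    show (R • · : E → E) ⁻¹' (Metric.ball 0 R)ᶜ = (Metric.ball 0 1)ᶜ by
      ext z; simp [norm_smul, abs_of_pos hR, hR]]

lemma setLIntegral_ball_one_rieszKernel_ne_top {α : ℝ} (hα : 0 < α) (hαd : α < finrank ℝ E) :
    ∫⁻ z in Metric.ball 0 1, rieszKernel α z ∂μ ≠ ∞ := by
  have hd : 1 ≤ finrank ℝ E := by exact_mod_cast hα.trans hαd
  have hint : IntegrableOn (fun z : E => ‖z‖ ^ (α - finrank ℝ E)) (Metric.ball 0 1) μ :=
    integrableOn_ball_of_norm_le_rpow (C := 1) (α := finrank ℝ E - α) hd (by linarith)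
      (.of_forall fun z => by
        rw [Real.norm_of_nonneg (by positivity), one_mul, neg_sub])
      (by fun_prop : Measurable fun z : E => ‖z‖ ^ (α - finrank ℝ E)).aestronglyMeasurable
  exact hint.lintegral_lt_top.ne

lemma setLIntegral_compl_ball_one_rieszKernel_ne_top {α : ℝ} (hα : α < 0) :
    ∫⁻ z in (Metric.ball 0 1)ᶜ, rieszKernel α z ∂μ ≠ ∞ := by
  set β : ℝ := finrank ℝ E - α with hβ
  have hβ0 : 0 < β := by have := (finrank ℝ E).cast_nonneg (α := ℝ); linarith
  have hint : Integrable (fun z : E => 2 ^ β * (1 + ‖z‖) ^ (-β)) μ :=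
    (integrable_one_add_norm (by linarith)).const_mul _
  refine ne_top_of_le_ne_top hint.lintegral_lt_top.ne ?_
  refine (setLIntegral_mono (by fun_prop) fun z hz => ?_).trans (setLIntegral_le_lintegral _ _)
  have hz1 : 1 ≤ ‖z‖ := by simpa using hz
  have hdouble : 2 ^ (-β) * ‖z‖ ^ (-β) ≤ (1 + ‖z‖) ^ (-β) := by
    rw [← Real.mul_rpow zero_le_two (norm_nonneg z)]
    exact Real.rpow_le_rpow_of_nonpos (by positivity) (by linarith) (neg_nonpos.2 hβ0.le)
  refine ENNReal.ofReal_le_ofReal ?_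
  calc ‖z‖ ^ (α - finrank ℝ E) = 2 ^ β * (2 ^ (-β) * ‖z‖ ^ (-β)) := by
        rw [← mul_assoc, ← Real.rpow_add zero_lt_two, add_neg_cancel, Real.rpow_zero, one_mul,
          hβ, neg_sub]
    _ ≤ 2 ^ β * (1 + ‖z‖) ^ (-β) := by gcongr

end RieszKernel

section RieszPotential

variable {E : Type*} [NormedAddCommGroup E] [NormedSpace ℝ E] [MeasurableSpace E]

/-- The Riesz potential `∫ y, ‖x - y‖ ^ (α - d) * f y` of order `α` of a nonnegative function,
without its normalising constant. -/
noncomputable def rieszPotential (μ : Measure E) (α : ℝ) (f : E → ℝ≥0∞) (x : E) : ℝ≥0∞ :=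
  ∫⁻ y, rieszKernel α (x - y) * f y ∂μ

variable {μ : Measure E}

lemma rieszPotential_congr_ae (α : ℝ) {f g : E → ℝ≥0∞} (hfg : f =ᵐ[μ] g) :
    rieszPotential μ α f = rieszPotential μ α g :=
  funext fun _ => lintegral_congr_ae <| hfg.mono fun y hy => by simp only [hy]

variable [BorelSpace E]

lemma rieszPotential_const_mul (α : ℝ) (c : ℝ≥0∞) {f : E → ℝ≥0∞} (hf : AEMeasurable f μ) (x : E) :
    rieszPotential μ α (fun y => c * f y) x = c * rieszPotential μ α f x := by
  simp_rw [rieszPotential, mul_left_comm _ c]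
  exact lintegral_const_mul'' c (by fun_prop)

lemma rieszPotential_add (α : ℝ) {f : E → ℝ≥0∞} (hf : AEMeasurable f μ) (g : E → ℝ≥0∞) (x : E) :
    rieszPotential μ α (fun y => f y + g y) x
      = rieszPotential μ α f x + rieszPotential μ α g x := by
  simp_rw [rieszPotential, mul_add]
  exact lintegral_add_left' (by fun_prop) _

variable [FiniteDimensional ℝ E] [SFinite μ]

lemma measurable_rieszPotential (α : ℝ) {f : E → ℝ≥0∞} (hf : AEMeasurable f μ) :
    Measurable (rieszPotential μ α f) := by
  rw [rieszPotential_congr_ae α hf.ae_eq_mk]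
  have := hf.measurable_mk
  unfold rieszPotential
  fun_prop

lemma lintegral_mul_rieszPotential_comm (α : ℝ) {f g : E → ℝ≥0∞} (hf : AEMeasurable f μ)
    (hg : AEMeasurable g μ) :
    ∫⁻ x, f x * rieszPotential μ α g x ∂μ = ∫⁻ x, g x * rieszPotential μ α f x ∂μ := by
  have := hf.comp_fst (ν := μ)
  have := hg.comp_snd (μ := μ)
  calc ∫⁻ x, f x * rieszPotential μ α g x ∂μ
      = ∫⁻ x, ∫⁻ y, f x * (rieszKernel α (x - y) * g y) ∂μ ∂μ :=
        lintegral_congr fun x => (lintegral_const_mul'' _ (by fun_prop)).symm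
    _ = ∫⁻ y, ∫⁻ x, f x * (rieszKernel α (x - y) * g y) ∂μ ∂μ :=
        lintegral_lintegral_swap (by unfold Function.uncurry; fun_prop)
    _ = ∫⁻ y, ∫⁻ x, g y * (rieszKernel α (y - x) * f x) ∂μ ∂μ :=
        lintegral_congr fun y => lintegral_congr fun x => by rw [rieszKernel_sub_comm]; ring
    _ = ∫⁻ y, g y * rieszPotential μ α f y ∂μ :=
        lintegral_congr fun y => lintegral_const_mul'' _ (by fun_prop)

lemma mul_le_mul_min_add_mul_min (a b : ℝ≥0∞) : a * b ≤ a * min a b + b * min b a := by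
  obtain hab | hba := le_total a b
  · simp [hab, mul_comm a b]
  · simp [hba]

lemma lintegral_mul_rieszPotential_le_add (α : ℝ) {f g : E → ℝ≥0∞} (hf : AEMeasurable f μ)
    (hg : AEMeasurable g μ) :
    ∫⁻ x, f x * rieszPotential μ α g x ∂μ
      ≤ ∫⁻ x, f x * ∫⁻ y, rieszKernel α (x - y) * min (f x) (g y) ∂μ ∂μ
        + ∫⁻ y, g y * ∫⁻ x, rieszKernel α (y - x) * min (g y) (f x) ∂μ ∂μ := by
  have := hf.comp_fst (ν := μ)
  have := hg.comp_snd (μ := μ)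
  have hmeas : AEMeasurable (fun z : E × E =>
      rieszKernel α (z.1 - z.2) * (f z.1 * min (f z.1) (g z.2))) (μ.prod μ) := by fun_prop
  have hmeas' : AEMeasurable (fun z : E × E =>
      rieszKernel α (z.1 - z.2) * (g z.2 * min (g z.2) (f z.1))) (μ.prod μ) := by fun_prop
  calc ∫⁻ x, f x * rieszPotential μ α g x ∂μ
      = ∫⁻ x, ∫⁻ y, rieszKernel α (x - y) * (f x * g y) ∂μ ∂μ := by
        simp_rw [mul_left_comm (rieszKernel α _)]
        exact lintegral_congr fun x => (lintegral_const_mul'' _ (by fun_prop)).symm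
    _ ≤ ∫⁻ x, ∫⁻ y, (rieszKernel α (x - y) * (f x * min (f x) (g y))
          + rieszKernel α (x - y) * (g y * min (g y) (f x))) ∂μ ∂μ := by
        simp_rw [← mul_add]
        gcongr
        exact mul_le_mul_min_add_mul_min _ _
    _ = ∫⁻ x, ∫⁻ y, rieszKernel α (x - y) * (f x * min (f x) (g y)) ∂μ ∂μ
          + ∫⁻ x, ∫⁻ y, rieszKernel α (x - y) * (g y * min (g y) (f x)) ∂μ ∂μ := by
        rw [← lintegral_add_left' hmeas.lintegral_prod_right']
        exact lintegral_congr fun x => lintegral_add_left' (by fun_prop) _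
    _ = ∫⁻ x, ∫⁻ y, rieszKernel α (x - y) * (f x * min (f x) (g y)) ∂μ ∂μ
          + ∫⁻ y, ∫⁻ x, rieszKernel α (y - x) * (g y * min (g y) (f x)) ∂μ ∂μ := by
        congr 1
        refine (lintegral_lintegral_swap hmeas').trans ?_
        exact lintegral_congr fun y => lintegral_congr fun x => by rw [rieszKernel_sub_comm]
    _ = _ := by
        simp_rw [mul_left_comm (rieszKernel α _)]
        congr 1 <;> exact lintegral_congr fun x => lintegral_const_mul'' _ (by fun_prop)

end RieszPotential

section HardyLittlewoodSobolev

variable {E : Type*} [NormedAddCommGroup E] [NormedSpace ℝ E] [MeasurableSpace E]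
  [BorelSpace E] [FiniteDimensional ℝ E] {μ : Measure E} [μ.IsAddHaarMeasure]

lemma lintegral_rieszKernel_mul_min_le_of_radius (α : ℝ) {r s : ℝ} (hsr : s.HolderConjugate r)
    {g : E → ℝ≥0∞} (hg : AEMeasurable g μ) (a : ℝ≥0∞) (R : ℝ) (x : E) :
    ∫⁻ y, rieszKernel α (x - y) * min a (g y) ∂μ
      ≤ (∫⁻ z in Metric.ball 0 R, rieszKernel α z ∂μ) * a
        + (∫⁻ z in (Metric.ball 0 R)ᶜ, rieszKernel α z ^ s ∂μ) ^ (1 / s)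
          * (∫⁻ y, g y ^ r ∂μ) ^ (1 / r) := by
  set near : E → ℝ≥0∞ := (Metric.ball 0 R).indicator (rieszKernel α)
  set far : E → ℝ≥0∞ := (Metric.ball 0 R)ᶜ.indicator (rieszKernel α)
  have hnear : Measurable near := (measurable_rieszKernel α).indicator measurableSet_ball
  have hfar : Measurable far := (measurable_rieszKernel α).indicator measurableSet_ball.compl
  have hnear_int : ∫⁻ y, near (x - y) ∂μ = ∫⁻ z in Metric.ball 0 R, rieszKernel α z ∂μ := by
    rw [lintegral_sub_left_eq_self near x, lintegral_indicator measurableSet_ball]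
  have hfar_int : ∫⁻ y, far (x - y) ^ s ∂μ
      = ∫⁻ z in (Metric.ball 0 R)ᶜ, rieszKernel α z ^ s ∂μ := by
    rw [lintegral_sub_left_eq_self (fun z => far z ^ s) x,
      ← lintegral_indicator measurableSet_ball.compl]
    congr with z
    by_cases hz : z ∈ Metric.ball (0 : E) R <;> simp [far, hz, hsr.pos]
  calc ∫⁻ y, rieszKernel α (x - y) * min a (g y) ∂μ
      = ∫⁻ y, (near (x - y) * min a (g y) + far (x - y) * min a (g y)) ∂μ := by
        simp_rw [← add_mul]
        congr with y
        rw [← Pi.add_apply near far, Set.indicator_self_add_compl]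
    _ ≤ ∫⁻ y, (near (x - y) * a + far (x - y) * g y) ∂μ := by
        gcongr
        exacts [min_le_left _ _, min_le_right _ _]
    _ = (∫⁻ y, near (x - y) ∂μ) * a + ∫⁻ y, far (x - y) * g y ∂μ := by
        rw [lintegral_add_left (by fun_prop), lintegral_mul_const _ (by fun_prop)]
    _ ≤ _ := by
        rw [hnear_int, ← hfar_int]
        gcongr
        exact ENNReal.lintegral_mul_le_Lp_mul_Lq μ hsr (by fun_prop) hg

lemma setLIntegral_compl_ball_rieszKernel_rpow (μ : Measure E) [μ.IsAddHaarMeasure] (α : ℝ)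
    {r s : ℝ} (hsr : s.HolderConjugate r) {R : ℝ} (hR : 0 < R) :
    (∫⁻ z in (Metric.ball 0 R)ᶜ, rieszKernel α z ^ s ∂μ) ^ (1 / s)
      = ENNReal.ofReal (R ^ (α - finrank ℝ E / r))
        * (∫⁻ z in (Metric.ball 0 1)ᶜ, rieszKernel α z ^ s ∂μ) ^ (1 / s) := by
  have hs : 0 ≤ 1 / s := one_div_nonneg.2 hsr.nonneg
  have hexp : (finrank ℝ E + s * (α - finrank ℝ E)) * (1 / s) = α - finrank ℝ E / r := by
    have := hsr.ne_zero
    have := hsr.symm.ne_zero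
    have := hsr.mul_eq_add
    field_simp
    linear_combination (-finrank ℝ E : ℝ) * this
  simp_rw [rieszKernel_rpow α hsr.nonneg]
  rw [setLIntegral_compl_ball_rieszKernel μ _ hR, ENNReal.mul_rpow_of_nonneg _ _ hs,
    ENNReal.ofReal_rpow_of_nonneg (by positivity) hs, ← Real.rpow_mul hR.le, hexp]

lemma setLIntegral_compl_ball_one_rieszKernel_rpow_ne_top (μ : Measure E) [μ.IsAddHaarMeasure]
    {α r s : ℝ} (hsr : s.HolderConjugate r) (hαr : α * r < finrank ℝ E) :
    ∫⁻ z in (Metric.ball 0 1)ᶜ, rieszKernel α z ^ s ∂μ ≠ ∞ := by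
  simp_rw [rieszKernel_rpow α hsr.nonneg]
  refine setLIntegral_compl_ball_one_rieszKernel_ne_top μ ?_
  have hr : s * (r - 1) = r := by rw [mul_comm]; exact hsr.symm.sub_one_mul_conj
  refine neg_of_mul_neg_left (b := r - 1) ?_ hsr.symm.sub_one_pos.le
  linear_combination hαr + (α - finrank ℝ E) * hr

/- The radius `R = a ^ (-r / d)` balances the contributions of the ball and of its complement. -/
lemma exists_lintegral_rieszKernel_mul_min_le (μ : Measure E) [μ.IsAddHaarMeasure] {α r : ℝ}
    (hα : 0 < α) (hr : 1 < r) (hαr : α * r < finrank ℝ E) :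
    ∃ C ≠ ∞, ∀ g : E → ℝ≥0∞, AEMeasurable g μ → ∫⁻ y, g y ^ r ∂μ ≤ 1 → ∀ a ≠ ∞, ∀ x,
      ∫⁻ y, rieszKernel α (x - y) * min a (g y) ∂μ ≤ C * a ^ (1 - α * r / finrank ℝ E) := by
  have hd0 : (0 : ℝ) < finrank ℝ E := lt_trans (by positivity) hαr
  have hsr : r.conjExponent.HolderConjugate r := (Real.HolderConjugate.conjExponent hr).symm
  set s := r.conjExponent
  set near := ∫⁻ z in Metric.ball 0 1, rieszKernel α z ∂μ
  set far := (∫⁻ z in (Metric.ball 0 1)ᶜ, rieszKernel α z ^ s ∂μ) ^ (1 / s)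
  have hnear : near ≠ ∞ := setLIntegral_ball_one_rieszKernel_ne_top μ hα (by nlinarith)
  have hfar : far ≠ ∞ := ENNReal.rpow_ne_top_of_nonneg (one_div_nonneg.2 hsr.nonneg)
    (setLIntegral_compl_ball_one_rieszKernel_rpow_ne_top μ hsr hαr)
  refine ⟨near + far, by finiteness, fun g hg hg1 a ha x => ?_⟩
  obtain rfl | ha0 := eq_or_ne a 0
  · simp
  obtain ⟨t, ht, rfl⟩ : ∃ t : ℝ, 0 < t ∧ ENNReal.ofReal t = a :=
    ⟨a.toReal, ENNReal.toReal_pos ha0 ha, ENNReal.ofReal_toReal ha⟩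
  set R := t ^ (-r / finrank ℝ E)
  have hR : 0 < R := by positivity
  have hnear_exp : R ^ α * t = t ^ (1 - α * r / finrank ℝ E) := by
    rw [← Real.rpow_mul ht.le, ← Real.rpow_add_one ht.ne']
    congr 1; ring
  have hfar_exp : R ^ (α - finrank ℝ E / r) = t ^ (1 - α * r / finrank ℝ E) := by
    rw [← Real.rpow_mul ht.le]
    congr 1; field_simp; ring
  calc ∫⁻ y, rieszKernel α (x - y) * min (ENNReal.ofReal t) (g y) ∂μ
      ≤ ENNReal.ofReal (R ^ α) * near * ENNReal.ofReal t
        + ENNReal.ofReal (R ^ (α - finrank ℝ E / r)) * far * 1 := by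
        rw [← setLIntegral_ball_rieszKernel μ α hR,
          ← setLIntegral_compl_ball_rieszKernel_rpow μ α hsr hR]
        refine (lintegral_rieszKernel_mul_min_le_of_radius α hsr hg _ R x).trans ?_
        gcongr
        exact ENNReal.rpow_le_one hg1 (one_div_nonneg.2 hsr.symm.nonneg)
    _ = (near + far) * ENNReal.ofReal t ^ (1 - α * r / finrank ℝ E) := by
        rw [mul_right_comm, ← ENNReal.ofReal_mul (by positivity), hnear_exp, hfar_exp,
          ENNReal.ofReal_rpow_of_pos ht]
        ring

/-- The exponent `r` for which the quadratic form of the Riesz potential of order `α` in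
dimension `d` is bounded on `L^r`, by the Hardy–Littlewood–Sobolev inequality. -/
noncomputable def hlsExponent (d α : ℝ) : ℝ := 2 * d / (d + α)

lemma one_lt_hlsExponent {d α : ℝ} (hα : 0 < α) (hαd : α < d) : 1 < hlsExponent d α := by
  rw [hlsExponent, one_lt_div (by linarith)]
  linarith

lemma mul_hlsExponent_lt {d α : ℝ} (hα : 0 < α) (hαd : α < d) : α * hlsExponent d α < d := by
  rw [hlsExponent, ← mul_div_assoc, div_lt_iff₀ (by linarith)]
  nlinarith

lemma one_sub_mul_hlsExponent_div {d α : ℝ} (hα : 0 < α) (hαd : α < d) :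
    1 - α * hlsExponent d α / d = hlsExponent d α - 1 := by
  have : d ≠ 0 := by linarith
  have : d + α ≠ 0 := by linarith
  rw [hlsExponent]
  field_simp
  ring

lemma exists_lintegral_mul_lintegral_rieszKernel_mul_min_le (μ : Measure E) [μ.IsAddHaarMeasure]
    {α r : ℝ} (hα : 0 < α) (hαd : α < finrank ℝ E) (hr : r = hlsExponent (finrank ℝ E) α) :
    ∃ C ≠ ∞, ∀ f g : E → ℝ≥0∞, AEMeasurable f μ → AEMeasurable g μ →
      ∫⁻ x, f x ^ r ∂μ ≤ 1 → ∫⁻ x, g x ^ r ∂μ ≤ 1 →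
      ∫⁻ x, f x * ∫⁻ y, rieszKernel α (x - y) * min (f x) (g y) ∂μ ∂μ ≤ C := by
  have hr1 := one_lt_hlsExponent hα hαd
  have hexp := one_sub_mul_hlsExponent_div hα hαd
  have hαr := mul_hlsExponent_lt hα hαd
  rw [← hr] at hr1 hexp hαr
  obtain ⟨C, hC, hmin⟩ := exists_lintegral_rieszKernel_mul_min_le μ hα hr1 hαr
  refine ⟨C, hC, fun f g hf hg hf1 hg1 => ?_⟩
  have hf_fin : ∀ᵐ x ∂μ, f x ≠ ∞ := by
    filter_upwards [ae_lt_top' (hf.pow_const r) (ne_top_of_le_ne_top ENNReal.one_ne_top hf1)]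
      with x hx
    exact ((ENNReal.rpow_lt_top_iff_of_pos (by linarith)).1 hx).ne
  calc ∫⁻ x, f x * ∫⁻ y, rieszKernel α (x - y) * min (f x) (g y) ∂μ ∂μ
      ≤ ∫⁻ x, C * f x ^ r ∂μ := by
        refine lintegral_mono_ae ?_
        filter_upwards [hf_fin] with x hx
        calc f x * ∫⁻ y, rieszKernel α (x - y) * min (f x) (g y) ∂μ
            ≤ f x ^ (1 : ℝ) * (C * f x ^ (r - 1)) := by
              rw [ENNReal.rpow_one, ← hexp]
              gcongr
              exact hmin g hg hg1 _ hx x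
          _ = C * f x ^ r := by
              rw [mul_left_comm, ← ENNReal.rpow_add_of_nonneg _ _ zero_le_one (by linarith),
                add_sub_cancel]
    _ = C * ∫⁻ x, f x ^ r ∂μ := lintegral_const_mul'' _ (hf.pow_const r)
    _ ≤ C := mul_le_of_le_one_right' hf1

theorem exists_lintegral_mul_rieszPotential_le (μ : Measure E) [μ.IsAddHaarMeasure] {α r : ℝ}
    (hα : 0 < α) (hαd : α < finrank ℝ E) (hr : r = hlsExponent (finrank ℝ E) α) :
    ∃ C ≠ ∞, ∀ f g : E → ℝ≥0∞, AEMeasurable f μ → AEMeasurable g μ →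
      ∫⁻ x, f x ^ r ∂μ ≠ ∞ → ∫⁻ x, g x ^ r ∂μ ≠ ∞ →
      ∫⁻ x, f x * rieszPotential μ α g x ∂μ
        ≤ C * (∫⁻ x, f x ^ r ∂μ) ^ (1 / r) * (∫⁻ x, g x ^ r ∂μ) ^ (1 / r) := by
  have hr0 : 0 < r := by linarith [one_lt_hlsExponent hα hαd]
  obtain ⟨C, hC, hdiag⟩ := exists_lintegral_mul_lintegral_rieszKernel_mul_min_le μ hα hαd hr
  refine ⟨C + C, by finiteness, fun f g hf hg hf_fin hg_fin => ?_⟩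
  obtain ⟨f₁, hf₁, hf₁_le, hff₁⟩ := exists_ae_eq_mul_and_lintegral_rpow_le_one hr0 hf hf_fin
  obtain ⟨g₁, hg₁, hg₁_le, hgg₁⟩ := exists_ae_eq_mul_and_lintegral_rpow_le_one hr0 hg hg_fin
  set a := (∫⁻ x, f x ^ r ∂μ) ^ (1 / r)
  set b := (∫⁻ x, g x ^ r ∂μ) ^ (1 / r)
  have hpot := measurable_rieszPotential α hg₁
  calc ∫⁻ x, f x * rieszPotential μ α g x ∂μ
      = ∫⁻ x, (a * b) * (f₁ x * rieszPotential μ α g₁ x) ∂μ := by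
        rw [rieszPotential_congr_ae α hgg₁]
        refine lintegral_congr_ae (hff₁.mono fun x hx => ?_)
        simp only [hx, rieszPotential_const_mul α b hg₁]
        ring
    _ = (a * b) * ∫⁻ x, f₁ x * rieszPotential μ α g₁ x ∂μ :=
        lintegral_const_mul'' _ (by fun_prop)
    _ ≤ (a * b) * (C + C) := by
        gcongr
        exact (lintegral_mul_rieszPotential_le_add α hf₁ hg₁).trans
          (add_le_add (hdiag f₁ g₁ hf₁ hg₁ hf₁_le hg₁_le) (hdiag g₁ f₁ hg₁ hf₁ hg₁_le hf₁_le))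
    _ = (C + C) * a * b := by ring

theorem lintegral_rieszPotential_rpow_ne_top {α r s : ℝ} (hα : 0 < α) (hαd : α < finrank ℝ E)
    (hr : r = hlsExponent (finrank ℝ E) α) (hrs : r.HolderConjugate s) {g : E → ℝ≥0∞}
    (hg : AEMeasurable g μ) (hg_fin : ∫⁻ x, g x ^ r ∂μ ≠ ∞) :
    ∫⁻ x, rieszPotential μ α g x ^ s ∂μ ≠ ∞ := by
  obtain ⟨C, hC, hHLS⟩ := exists_lintegral_mul_rieszPotential_le μ hα hαd hr
  have hr0 : 0 ≤ 1 / r := one_div_nonneg.2 hrs.nonneg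
  refine ne_top_of_le_ne_top ?_ (lintegral_rpow_le_of_forall_lintegral_mul_le hrs
    (C := C * (∫⁻ x, g x ^ r ∂μ) ^ (1 / r)) fun f hf hf_fin => ?_)
  · exact ENNReal.rpow_ne_top_of_nonneg hrs.symm.nonneg (by finiteness)
  · rw [mul_right_comm]
    exact hHLS f g hf.aemeasurable hg hf_fin hg_fin

lemma tendsto_lintegral_mul_rieszPotential_zero_of_lintegral_rpow {α r : ℝ} (hα : 0 < α)
    (hαd : α < finrank ℝ E) (hr : r = hlsExponent (finrank ℝ E) α) {e g : ℕ → E → ℝ≥0∞}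
    {M : ℝ≥0∞} (he : ∀ n, AEMeasurable (e n) μ) (hg : ∀ n, AEMeasurable (g n) μ) (hM : M ≠ ∞)
    (hgM : ∀ n, ∫⁻ x, g n x ^ r ∂μ ≤ M)
    (he_lim : Tendsto (fun n => ∫⁻ x, e n x ^ r ∂μ) atTop (𝓝 0)) :
    Tendsto (fun n => ∫⁻ x, e n x * rieszPotential μ α (g n) x ∂μ) atTop (𝓝 0) := by
  obtain ⟨C, hC, hHLS⟩ := exists_lintegral_mul_rieszPotential_le μ hα hαd hr
  have hr0 : 0 < 1 / r := one_div_pos.2 (by linarith [one_lt_hlsExponent hα hαd])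
  have hbound_lim :
      Tendsto (fun n => C * (∫⁻ x, e n x ^ r ∂μ) ^ (1 / r) * M ^ (1 / r)) atTop (𝓝 0) := by
    have hlim := ENNReal.Tendsto.mul_const (b := M ^ (1 / r))
      (ENNReal.Tendsto.const_mul (he_lim.ennrpow_const (1 / r)) (.inr hC)) (.inr (by finiteness))
    rwa [ENNReal.zero_rpow_of_pos hr0, mul_zero, zero_mul] at hlim
  refine tendsto_of_tendsto_of_tendsto_of_le_of_le' tendsto_const_nhds hbound_lim
    (.of_forall fun _ => zero_le) ?_
  filter_upwards [he_lim.eventually_lt_const zero_lt_one] with n hn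
  refine (hHLS _ _ (he n) (hg n) hn.ne_top (ne_top_of_le_ne_top hM (hgM n))).trans ?_
  gcongr
  exact hgM n

lemma tendsto_lintegral_mul_rieszPotential_zero_of_ae {α r : ℝ} (hα : 0 < α)
    (hαd : α < finrank ℝ E) (hr : r = hlsExponent (finrank ℝ E) α) {g : ℕ → E → ℝ≥0∞}
    {h : E → ℝ≥0∞} {M : ℝ≥0∞} (hg : ∀ n, AEMeasurable (g n) μ) (hh : AEMeasurable h μ)
    (hM : M ≠ ∞) (hgM : ∀ n, ∫⁻ x, g n x ^ r ∂μ ≤ M) (hh_fin : ∫⁻ x, h x ^ r ∂μ ≠ ∞)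
    (hlim : ∀ᵐ x ∂μ, Tendsto (g · x) atTop (𝓝 0)) :
    Tendsto (fun n => ∫⁻ x, g n x * rieszPotential μ α h x ∂μ) atTop (𝓝 0) := by
  have hrs : r.HolderConjugate r.conjExponent :=
    Real.HolderConjugate.conjExponent (hr ▸ one_lt_hlsExponent hα hαd)
  exact tendsto_lintegral_mul_zero_of_ae_tendsto_zero hrs hg
    (measurable_rieszPotential α hh).aemeasurable hM hgM
    (lintegral_rieszPotential_rpow_ne_top hα hαd hr hrs hh hh_fin) hlim

end HardyLittlewoodSobolev

section NonlocalBrezisLieb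

variable {E F : Type*} [NormedAddCommGroup F]

/-- The two-point analogue of `brezisLiebDefect`: the failure of `(a, a') ↦ ‖a'‖ ^ p * ‖a‖ ^ p`
to be additive on the splitting `(a, a') = (a - b, a' - b') + (b, b')`. -/
noncomputable def brezisLiebProdDefect (p : ℝ) (a b a' b' : F) : ℝ :=
  ‖a'‖ ^ p * ‖a‖ ^ p - ‖a' - b'‖ ^ p * ‖a - b‖ ^ p - ‖b'‖ ^ p * ‖b‖ ^ p

lemma brezisLiebProdDefect_eq (p : ℝ) (a b a' b' : F) :
    brezisLiebProdDefect p a b a' b'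
      = ‖a‖ ^ p * brezisLiebDefect p a' b'
        + brezisLiebDefect p a b * ‖a' - b'‖ ^ p + brezisLiebDefect p a b * ‖b'‖ ^ p
        + ‖a - b‖ ^ p * ‖b'‖ ^ p + ‖b‖ ^ p * ‖a' - b'‖ ^ p := by
  unfold brezisLiebProdDefect brezisLiebDefect
  ring

lemma enorm_brezisLiebProdDefect_le {p : ℝ} (hp : 0 ≤ p) (a b a' b' : F) :
    ‖brezisLiebProdDefect p a b a' b'‖ₑ
      ≤ ‖a‖ₑ ^ p * ‖brezisLiebDefect p a' b'‖ₑ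
        + ‖brezisLiebDefect p a b‖ₑ * ‖a' - b'‖ₑ ^ p + ‖brezisLiebDefect p a b‖ₑ * ‖b'‖ₑ ^ p
        + ‖a - b‖ₑ ^ p * ‖b'‖ₑ ^ p + ‖b‖ₑ ^ p * ‖a' - b'‖ₑ ^ p := by
  simp only [brezisLiebProdDefect_eq, ← enorm_norm_rpow hp, ← enorm_mul]
  refine (enorm_add_le _ _).trans ?_
  gcongr
  refine (enorm_add_le _ _).trans ?_
  gcongr
  exact enorm_add₃_le

variable [NormedAddCommGroup E] [NormedSpace ℝ E] [MeasurableSpace E] [BorelSpace E]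
  {μ : Measure E}

lemma lintegral_enorm_brezisLiebProdDefect_mul_rieszKernel_le {p : ℝ} (hp : 0 ≤ p) (α : ℝ)
    {u v : E → F} (hu : AEStronglyMeasurable u μ) (hv : AEStronglyMeasurable v μ) (x : E) :
    ∫⁻ y, ‖brezisLiebProdDefect p (u x) (v x) (u y) (v y)‖ₑ * rieszKernel α (x - y) ∂μ
      ≤ ‖u x‖ₑ ^ p * rieszPotential μ α (fun y => ‖brezisLiebDefect p (u y) (v y)‖ₑ) x
        + ‖brezisLiebDefect p (u x) (v x)‖ₑ * rieszPotential μ α (fun y => ‖u y - v y‖ₑ ^ p) x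
        + ‖brezisLiebDefect p (u x) (v x)‖ₑ * rieszPotential μ α (fun y => ‖v y‖ₑ ^ p) x
        + ‖u x - v x‖ₑ ^ p * rieszPotential μ α (fun y => ‖v y‖ₑ ^ p) x
        + ‖v x‖ₑ ^ p * rieszPotential μ α (fun y => ‖u y - v y‖ₑ ^ p) x := by
  have he := (aestronglyMeasurable_brezisLiebDefect hp hu hv).enorm
  have hG : AEMeasurable (fun y => ‖u y - v y‖ₑ ^ p) μ := (hu.sub hv).enorm.pow_const p
  have hh : AEMeasurable (fun y => ‖v y‖ₑ ^ p) μ := hv.enorm.pow_const p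
  simp_rw [← rieszPotential_const_mul α _ he, ← rieszPotential_const_mul α _ hh,
    ← rieszPotential_const_mul α _ hG]
  iterate 4 rw [← rieszPotential_add α (by fun_prop)]
  refine lintegral_mono fun y => ?_
  rw [mul_comm]
  gcongr
  exact enorm_brezisLiebProdDefect_le hp _ _ _ _

variable [FiniteDimensional ℝ E]

lemma lintegral_lintegral_enorm_brezisLiebProdDefect_mul_rieszKernel_le [SFinite μ] {p : ℝ}
    (hp : 0 ≤ p) (α : ℝ) {u v : E → F} (hu : AEStronglyMeasurable u μ)
    (hv : AEStronglyMeasurable v μ) :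
    ∫⁻ x, ∫⁻ y, ‖brezisLiebProdDefect p (u x) (v x) (u y) (v y)‖ₑ * rieszKernel α (x - y) ∂μ ∂μ
      ≤ ∫⁻ x, ‖brezisLiebDefect p (u x) (v x)‖ₑ * rieszPotential μ α (‖u ·‖ₑ ^ p) x ∂μ
        + ∫⁻ x, ‖brezisLiebDefect p (u x) (v x)‖ₑ
          * rieszPotential μ α (fun y => ‖u y - v y‖ₑ ^ p) x ∂μ
        + ∫⁻ x, ‖brezisLiebDefect p (u x) (v x)‖ₑ * rieszPotential μ α (‖v ·‖ₑ ^ p) x ∂μ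
        + 2 * ∫⁻ x, ‖u x - v x‖ₑ ^ p * rieszPotential μ α (‖v ·‖ₑ ^ p) x ∂μ := by
  have he := (aestronglyMeasurable_brezisLiebDefect hp hu hv).enorm
  have hA : AEMeasurable (fun y => ‖u y‖ₑ ^ p) μ := hu.enorm.pow_const p
  have hG : AEMeasurable (fun y => ‖u y - v y‖ₑ ^ p) μ := (hu.sub hv).enorm.pow_const p
  have hh : AEMeasurable (fun y => ‖v y‖ₑ ^ p) μ := hv.enorm.pow_const p
  have := measurable_rieszPotential α he
  have := measurable_rieszPotential α hG
  have := measurable_rieszPotential α hh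
  refine (lintegral_mono fun x =>
    lintegral_enorm_brezisLiebProdDefect_mul_rieszKernel_le hp α hu hv x).trans_eq ?_
  iterate 4 rw [lintegral_add_left' (by fun_prop)]
  rw [lintegral_mul_rieszPotential_comm α hA he, lintegral_mul_rieszPotential_comm α hh hG,
    two_mul, add_assoc]

theorem tendsto_lintegral_lintegral_brezisLiebProdDefect_mul_rieszKernel [μ.IsAddHaarMeasure]
    {α p r : ℝ} (hα : 0 < α) (hαd : α < finrank ℝ E) (hp : 0 < p)
    (hr : r = hlsExponent (finrank ℝ E) α) {u : ℕ → E → F} {v : E → F} {M : ℝ≥0∞}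
    (hM : M ≠ ∞) (hu : ∀ n, AEStronglyMeasurable (u n) μ)
    (hbound : ∀ n, ∫⁻ x, ‖u n x‖ₑ ^ (p * r) ∂μ ≤ M)
    (hlim : ∀ᵐ x ∂μ, Tendsto (u · x) atTop (𝓝 (v x))) :
    Tendsto (fun n => ∫⁻ x, ∫⁻ y, ‖brezisLiebProdDefect p (u n x) (v x) (u n y) (v y)‖ₑ
      * rieszKernel α (x - y) ∂μ ∂μ) atTop (𝓝 0) := by
  have hr0 : 0 < r := by linarith [one_lt_hlsExponent hα hαd]
  have hv : AEStronglyMeasurable v μ := aestronglyMeasurable_of_tendsto_ae atTop hu hlim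
  have he n := (aestronglyMeasurable_brezisLiebDefect hp.le (hu n) hv).enorm
  have hA n : AEMeasurable (fun y => ‖u n y‖ₑ ^ p) μ := (hu n).enorm.pow_const p
  have hG n : AEMeasurable (fun y => ‖u n y - v y‖ₑ ^ p) μ := ((hu n).sub hv).enorm.pow_const p
  have hh : AEMeasurable (fun y => ‖v y‖ₑ ^ p) μ := hv.enorm.pow_const p
  have hAM n : ∫⁻ x, (‖u n x‖ₑ ^ p) ^ r ∂μ ≤ M := by
    simpa only [← ENNReal.rpow_mul] using hbound n
  have hhM : ∫⁻ x, (‖v x‖ₑ ^ p) ^ r ∂μ ≤ M := by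
    simpa only [← ENNReal.rpow_mul] using lintegral_enorm_rpow_le_of_ae_tendsto hu hbound hlim
  have hGM n : ∫⁻ x, (‖u n x - v x‖ₑ ^ p) ^ r ∂μ ≤ 2 ^ (p * r) * (M + M) := by
    simpa only [← ENNReal.rpow_mul] using
      lintegral_enorm_sub_rpow_le_of_ae_tendsto (by positivity) hu hbound hlim n
  have he_lim := tendsto_lintegral_brezisLiebDefect_rpow hp hr0 hu hM hbound hlim
  have hG_lim : ∀ᵐ x ∂μ, Tendsto (fun n => ‖u n x - v x‖ₑ ^ p) atTop (𝓝 0) :=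
    hlim.mono fun x hx => by simpa [hp] using (hx.sub_const (v x)).enorm.ennrpow_const p
  have hsmall {g : ℕ → E → ℝ≥0∞} {M' : ℝ≥0∞} (hg : ∀ n, AEMeasurable (g n) μ) (hM' : M' ≠ ∞)
      (hgM : ∀ n, ∫⁻ x, g n x ^ r ∂μ ≤ M') :=
    tendsto_lintegral_mul_rieszPotential_zero_of_lintegral_rpow hα hαd hr he hg hM' hgM he_lim
  have hcross := tendsto_lintegral_mul_rieszPotential_zero_of_ae hα hαd hr hG hh
    (by finiteness) hGM (ne_top_of_le_ne_top hM hhM) hG_lim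
  have hsum := (((hsmall hA hM hAM).add (hsmall hG (by finiteness) hGM)).add
    (hsmall (fun _ => hh) hM fun _ => hhM)).add
    (ENNReal.Tendsto.const_mul (a := 2) hcross (.inr ENNReal.ofNat_ne_top))
  simp only [mul_zero, add_zero] at hsum
  exact tendsto_of_tendsto_of_tendsto_of_le_of_le tendsto_const_nhds hsum (fun _ => zero_le)
    fun n => lintegral_lintegral_enorm_brezisLiebProdDefect_mul_rieszKernel_le hp.le α (hu n) hv

theorem nonlocal_brezis_lieb_general [μ.IsAddHaarMeasure]
    {α p : ℝ} (hα : 0 < α) (hαd : α < finrank ℝ E) (hp : 0 < p) {u : ℕ → E → F} {v : E → F}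
    {M : ℝ≥0∞} (hM : M ≠ ∞) (hu : ∀ n, AEStronglyMeasurable (u n) μ)
    (hbound : ∀ n, ∫⁻ x, ‖u n x‖ₑ ^ (2 * finrank ℝ E * p / (finrank ℝ E + α)) ∂μ ≤ M)
    (hlim : ∀ᵐ x ∂μ, Tendsto (u · x) atTop (𝓝 (v x))) :
    Tendsto (fun n => ∫⁻ x, ‖∫ y, (‖u n y‖ ^ p * ‖u n x‖ ^ p
        - ‖u n y - v y‖ ^ p * ‖u n x - v x‖ ^ p - ‖v y‖ ^ p * ‖v x‖ ^ p)
          * ‖x - y‖ ^ (α - finrank ℝ E) ∂μ‖ₑ ∂μ) atTop (𝓝 0) := by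
  have hexp : 2 * finrank ℝ E * p / (finrank ℝ E + α) = p * hlsExponent (finrank ℝ E) α := by
    rw [hlsExponent]; ring
  rw [hexp] at hbound
  refine tendsto_of_tendsto_of_tendsto_of_le_of_le tendsto_const_nhds
    (tendsto_lintegral_lintegral_brezisLiebProdDefect_mul_rieszKernel hα hαd hp rfl hM hu hbound
      hlim)
    (fun _ => zero_le) fun n => lintegral_mono fun x => ?_
  refine (enorm_integral_le_lintegral_enorm _).trans_eq (lintegral_congr fun y => ?_)
  rw [enorm_mul, Real.enorm_of_nonneg (by positivity : 0 ≤ ‖x - y‖ ^ (α - finrank ℝ E))]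
  rfl

end NonlocalBrezisLieb

/-- Nonlocal Brezis–Lieb lemma (Lemma 3.4 of the paper). -/
theorem nonlocal_brezis_lieb
    (N : ℕ) (hN : 3 ≤ N) (α p : ℝ) (hα0 : 0 < α) (hαN : α < N)
    (hp1 : 1 ≤ p) (hp2 : p < 2 * N / (N + α))
    (u : ℕ → EuclideanSpace ℝ (Fin N) → ℝ) (ulim : EuclideanSpace ℝ (Fin N) → ℝ)
    (hmeas : ∀ n, Measurable (u n)) (hulim : Measurable ulim)
    (hbound : ∃ C : ℝ, ∀ n,
      ∫⁻ x, ENNReal.ofReal (|u n x| ^ (2 * N * p / (N + α))) ∂volume ≤ ENNReal.ofReal C)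
    (hae : ∀ᵐ x ∂(volume : Measure (EuclideanSpace ℝ (Fin N))),
      Tendsto (fun n => u n x) atTop (𝓝 (ulim x))) :
    Tendsto (fun n =>
        ∫⁻ x, ENNReal.ofReal
          (|∫ y, (|u n y| ^ p * |u n x| ^ p
              - |u n y - ulim y| ^ p * |u n x - ulim x| ^ p
              - |ulim y| ^ p * |ulim x| ^ p) * ‖x - y‖ ^ (α - N) ∂volume|) ∂volume)
      atTop (𝓝 0) := by
  obtain ⟨C, hC⟩ := hbound
  have hq : 0 ≤ 2 * N * p / (N + α) := by positivity
  simp only [← ENNReal.ofReal_rpow_of_nonneg (abs_nonneg _) hq, ← Real.enorm_eq_ofReal_abs] at hC ⊢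
  simpa using nonlocal_brezis_lieb_general hα0 (by simpa using hαN) (by linarith : 0 < p)
    ENNReal.ofReal_ne_top (fun n => (hmeas n).aestronglyMeasurable) (by simpa using hC) hae
end

section
/- Let N ≥ 3 be an integer and let α, p, q, γ be real numbers with α ∈ (0,N), p > 1, q > 1, γ < (N+2)/2, p ≥ (N+α)/(N−2) and (N+α)/p ≤ (N+2−2γ)/q. Then there exist no real numbers G ≥ 0, U > 0, A ≥ 0 and B with B ≥ −γA such that ((N−2)/2)·G + (N/2)·U + ((N+2)/(2q))·A + (1/q)·B = ((N+α)/(2p))·(G + U + A). -/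
/-!
Let `c = (N + α) / (2 * p)` be the coefficient of the energy side. The bound `-γ * A ≤ B` absorbs
`B` into the `A` term, and then each of `G`, `U`, `A` carries a coefficient at least `c` on the
Pohozaev side. As the coefficient of `U` is larger by one than that of `G`, the Pohozaev side
exceeds the energy side by at least `U > 0`.
-/

section PohozaevInequality

variable {𝕜 : Type*} [Field 𝕜] [LinearOrder 𝕜] [IsStrictOrderedRing 𝕜]

lemma sub_two_mul_div_mul_le_of_neg_mul_le {q γ A B : 𝕜} (d : 𝕜) (hq : 0 < q)
    (hB : -γ * A ≤ B) :
    (d - 2 * γ) / (2 * q) * A ≤ d / (2 * q) * A + 1 / q * B :=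
  calc (d - 2 * γ) / (2 * q) * A = d / (2 * q) * A + 1 / q * (-γ * A) := by
        field_simp
        ring
    _ ≤ d / (2 * q) * A + 1 / q * B := by gcongr

lemma mul_add_add_add_le_of_coeff_le {N c d G U A : 𝕜} (hcN : c ≤ (N - 2) / 2) (hcd : c ≤ d)
    (hG : 0 ≤ G) (hU : 0 ≤ U) (hA : 0 ≤ A) :
    c * (G + U + A) + U ≤ (N - 2) / 2 * G + N / 2 * U + d * A :=
  calc c * (G + U + A) + U = c * G + (c + 1) * U + c * A := by ring
    _ ≤ (N - 2) / 2 * G + ((N - 2) / 2 + 1) * U + d * A := by gcongr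
    _ = (N - 2) / 2 * G + N / 2 * U + d * A := by ring

theorem pohozaev_nonexistence_i_general {N α p q γ : 𝕜} (hN : 2 < N) (hp : 0 < p) (hq : 0 < q)
    (hp2 : (N + α) / (N - 2) ≤ p) (hpq : (N + α) / p ≤ (N + 2 - 2 * γ) / q) :
    ¬ ∃ G U A B : 𝕜, 0 ≤ G ∧ 0 < U ∧ 0 ≤ A ∧ -γ * A ≤ B ∧
      ((N - 2) / 2) * G + (N / 2) * U + ((N + 2) / (2 * q)) * A + (1 / q) * B
        = ((N + α) / (2 * p)) * (G + U + A) := by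
  rintro ⟨G, U, A, B, hG, hU, hA, hB, pohozaev_eq⟩
  have coeff_le_gradient : (N + α) / (2 * p) ≤ (N - 2) / 2 := by
    rw [div_mul_eq_div_div_swap]
    gcongr
    exact (div_le_comm₀ (sub_pos.2 hN) hp).1 hp2
  have coeff_le_potential : (N + α) / (2 * p) ≤ (N + 2 - 2 * γ) / (2 * q) := by
    rw [div_mul_eq_div_div_swap, div_mul_eq_div_div_swap _ 2 q]
    gcongr
  have absorb_B := sub_two_mul_div_mul_le_of_neg_mul_le (N + 2) hq hB
  have gap := mul_add_add_add_le_of_coeff_le coeff_le_gradient coeff_le_potential hG hU.le hA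
  linarith

end PohozaevInequality

/-- Algebraic core of the nonexistence Theorem 2.1(i) of the paper. -/
theorem pohozaev_nonexistence_i
    (N : ℕ) (hN : 3 ≤ N) (α p q γ : ℝ)
    (hα0 : 0 < α) (hαN : α < N) (hp : 1 < p) (hq : 1 < q)
    (hγ : γ < (N + 2) / 2)
    (hp2 : (N + α) / (N - 2) ≤ p)
    (hpq : (N + α) / p ≤ (N + 2 - 2 * γ) / q) :
    ¬ ∃ G U A B : ℝ, 0 ≤ G ∧ 0 < U ∧ 0 ≤ A ∧ -γ * A ≤ B ∧
      ((N - 2) / 2) * G + ((N : ℝ) / 2) * U + ((N + 2) / (2 * q)) * A + (1 / q) * B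
        = ((N + α) / (2 * p)) * (G + U + A) :=
  pohozaev_nonexistence_i_general (by exact_mod_cast hN) (one_pos.trans hp) (one_pos.trans hq)
    hp2 hpq
end

section
/- Let N ≥ 1 be an integer and let u : ℝ^N → ℝ be a smooth (C^∞) function with compact support. Define v : ℝ^N → ℝ by v(x) = ⟨x, ∇u(x)⟩. Then ∫_{ℝ^N} ⟨∇u(x), ∇v(x)⟩ dx = −((N−2)/2) ∫_{ℝ^N} ‖∇u(x)‖² dx. -/
open MeasureTheory

/-!
Write `G = ∇u` and `H = DG` for the Hessian. By the product rule and the symmetry of `H`,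
`∇v(x) = G(x) + H(x) x`, so that `⟨G, ∇v⟩ = ‖G‖² + ½ D(‖G‖²)(x) x`. The radial field `x ↦ x` has
divergence `N`, so integrating the last term by parts contributes `-(N / 2) ∫ ‖G‖²`.
-/

open scoped Gradient

section LinearVectorField

variable {E F : Type*} [NormedAddCommGroup E] [NormedSpace ℝ E]
  [NormedAddCommGroup F] [NormedSpace ℝ F] [MeasurableSpace E] [BorelSpace E]
  {μ : Measure E} {w : E → F}

lemma integrable_fderiv_apply_of_hasCompactSupport [IsFiniteMeasureOnCompacts μ]
    (hw : ContDiff ℝ 1 w) (hs : HasCompactSupport w) {V : E → E} (hV : Continuous V) :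
    Integrable (fun x ↦ fderiv ℝ w x (V x)) μ := by
  have hcont : Continuous fun x ↦ fderiv ℝ w x (V x) :=
    (hw.continuous_fderiv one_ne_zero).clm_apply hV
  have hsupp : HasCompactSupport fun x ↦ fderiv ℝ w x (V x) :=
    (hs.fderiv ℝ).mono fun x hx h0 ↦ hx (by simp [h0])
  exact hcont.integrable_of_hasCompactSupport hsupp

variable [FiniteDimensional ℝ E] [μ.IsAddHaarMeasure]

lemma integral_fderiv_apply_clm_smul (hw : ContDiff ℝ 1 w) (hs : HasCompactSupport w)
    (ℓ : E →L[ℝ] ℝ) (e : E) :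
    ∫ x, fderiv ℝ w x (ℓ x • e) ∂μ = -(ℓ e • ∫ x, w x ∂μ) := by
  have hint : Integrable (fun x ↦ ℓ x • fderiv ℝ w x e) μ := by
    simpa only [map_smul] using
      integrable_fderiv_apply_of_hasCompactSupport hw hs (V := fun x ↦ ℓ x • e) (by fun_prop)
  have hwint : Integrable w μ := hw.continuous.integrable_of_hasCompactSupport hs
  have hℓw : Integrable (fun x ↦ ℓ x • w x) μ :=
    (ℓ.continuous.smul hw.continuous).integrable_of_hasCompactSupport hs.smul_left
  calc ∫ x, fderiv ℝ w x (ℓ x • e) ∂μ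
      = ∫ x, ℓ x • fderiv ℝ w x e ∂μ := by simp only [map_smul]
    _ = -∫ x, fderiv ℝ ℓ x e • w x ∂μ :=
      integral_smul_fderiv_eq_neg_fderiv_smul_of_integrable
        (by simpa only [ContinuousLinearMap.fderiv] using hwint.fun_smul (ℓ e)) hint hℓw
        (fun _ _ ↦ ℓ.differentiableAt) (fun x _ ↦ hw.differentiable one_ne_zero x)
    _ = -(ℓ e • ∫ x, w x ∂μ) := by simp only [ContinuousLinearMap.fderiv, integral_smul]

lemma integral_fderiv_apply_clm (hw : ContDiff ℝ 1 w) (hs : HasCompactSupport w)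
    (A : E →L[ℝ] E) :
    ∫ x, fderiv ℝ w x (A x) ∂μ = -(LinearMap.trace ℝ E A • ∫ x, w x ∂μ) := by
  let b := Module.finBasis ℝ E
  let coord i : E →L[ℝ] ℝ := (b.coord i).toContinuousLinearMap
  have hsum x : fderiv ℝ w x (A x) = ∑ i, fderiv ℝ w x (coord i x • A (b i)) := by
    conv_lhs => rw [← b.sum_repr x, map_sum, map_sum]
    simp [coord]
  have htrace : LinearMap.trace ℝ E A = ∑ i, coord i (A (b i)) := by
    simp [LinearMap.trace_eq_matrix_trace ℝ b, Matrix.trace, LinearMap.toMatrix_apply, coord]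
  calc ∫ x, fderiv ℝ w x (A x) ∂μ
      = ∑ i, ∫ x, fderiv ℝ w x (coord i x • A (b i)) ∂μ := by
        simp only [hsum]
        exact integral_finsetSum _ fun i _ ↦
          integrable_fderiv_apply_of_hasCompactSupport hw hs (by fun_prop)
    _ = -(LinearMap.trace ℝ E A • ∫ x, w x ∂μ) := by
        simp only [integral_fderiv_apply_clm_smul hw hs, htrace, Finset.sum_neg_distrib,
          Finset.sum_smul]

end LinearVectorField

section Gradient

variable {E : Type*} [NormedAddCommGroup E] [InnerProductSpace ℝ E] [CompleteSpace E]
  {u : E → ℝ} {x : E}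

lemma contDiffAt_gradient {m n : WithTop ℕ∞} (hu : ContDiffAt ℝ n u x) (hmn : m + 1 ≤ n) :
    ContDiffAt ℝ m (∇ u) x :=
  (InnerProductSpace.toDual ℝ E).symm.contDiff.contDiffAt.comp x (hu.fderiv_right hmn)

lemma hasCompactSupport_gradient (hs : HasCompactSupport u) : HasCompactSupport (∇ u) :=
  (hs.fderiv ℝ).comp_left (map_zero (InnerProductSpace.toDual ℝ E).symm)

lemma inner_fderiv_gradient_left (h k : E) :
    inner ℝ (fderiv ℝ (∇ u) x h) k = fderiv ℝ (fderiv ℝ u) x h k := by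
  have hcomp : fderiv ℝ (∇ u) x = _ :=
    (InnerProductSpace.toDual ℝ E).symm.comp_fderiv (f := fderiv ℝ u) (x := x)
  rw [hcomp]
  exact InnerProductSpace.toDual_symm_apply

lemma isSymmetric_fderiv_gradient (hu : IsSymmSndFDerivAt ℝ u x) :
    (fderiv ℝ (∇ u) x : E →ₗ[ℝ] E).IsSymmetric := fun h k ↦ by
  rw [ContinuousLinearMap.coe_coe, real_inner_comm _ h, inner_fderiv_gradient_left,
    inner_fderiv_gradient_left, hu.eq]

lemma inner_gradient_gradient_inner_self (hu : ContDiffAt ℝ 2 u x) :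
    inner ℝ (∇ u x) (∇ (fun y ↦ inner ℝ y (∇ u y)) x) =
      ‖∇ u x‖ ^ 2 + 2⁻¹ * fderiv ℝ (fun y ↦ ‖∇ u y‖ ^ 2) x x := by
  have hG : DifferentiableAt ℝ (∇ u) x :=
    (contDiffAt_gradient hu one_add_one_eq_two.le).differentiableAt one_ne_zero
  have hsymm : inner ℝ (fderiv ℝ (∇ u) x x) (∇ u x) = inner ℝ x (fderiv ℝ (∇ u) x (∇ u x)) :=
    isSymmetric_fderiv_gradient (hu.isSymmSndFDerivAt (by simp)) x (∇ u x)
  have hnorm_sq : fderiv ℝ (fun y ↦ ‖∇ u y‖ ^ 2) x x =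
      2 * inner ℝ (fderiv ℝ (∇ u) x x) (∇ u x) := by
    rw [hG.hasFDerivAt.norm_sq.fderiv, real_inner_comm]
    simp
  calc inner ℝ (∇ u x) (∇ (fun y ↦ inner ℝ y (∇ u y)) x)
      = fderiv ℝ (fun y ↦ inner ℝ y (∇ u y)) x (∇ u x) := by
        rw [real_inner_comm, inner_gradient_left]
    _ = inner ℝ x (fderiv ℝ (∇ u) x (∇ u x)) + inner ℝ (∇ u x) (∇ u x) := by
        rw [fderiv_inner_apply ℝ differentiableAt_fun_id hG, fderiv_fun_id,
          ContinuousLinearMap.id_apply]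
    _ = ‖∇ u x‖ ^ 2 + 2⁻¹ * fderiv ℝ (fun y ↦ ‖∇ u y‖ ^ 2) x x := by
        rw [← hsymm, hnorm_sq, real_inner_self_eq_norm_sq]
        ring

end Gradient

theorem integral_grad_u_dot_grad_v_general {E : Type*} [NormedAddCommGroup E]
    [InnerProductSpace ℝ E] [FiniteDimensional ℝ E] [MeasurableSpace E] [BorelSpace E]
    (μ : Measure E) [μ.IsAddHaarMeasure] {u : E → ℝ} (hu : ContDiff ℝ 2 u)
    (hsupp : HasCompactSupport u) :
    ∫ x, inner ℝ (∇ u x) (∇ (fun y ↦ inner ℝ y (∇ u y)) x) ∂μ =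
      -(((Module.finrank ℝ E : ℝ) - 2) / 2) * ∫ x, ‖∇ u x‖ ^ 2 ∂μ := by
  have hG : ContDiff ℝ 1 (∇ u) := contDiff_iff_contDiffAt.2 fun _ ↦
    contDiffAt_gradient hu.contDiffAt one_add_one_eq_two.le
  have hw : ContDiff ℝ 1 fun x ↦ ‖∇ u x‖ ^ 2 := hG.norm_sq ℝ
  have hws : HasCompactSupport fun x ↦ ‖∇ u x‖ ^ 2 :=
    (hasCompactSupport_gradient hsupp).comp_left (g := fun y : E ↦ ‖y‖ ^ 2) (by simp)
  have hradial : ∫ x, fderiv ℝ (fun y ↦ ‖∇ u y‖ ^ 2) x x ∂μ =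
      -((Module.finrank ℝ E : ℝ) * ∫ x, ‖∇ u x‖ ^ 2 ∂μ) := by
    simpa using integral_fderiv_apply_clm (μ := μ) hw hws (.id ℝ E)
  simp only [inner_gradient_gradient_inner_self hu.contDiffAt]
  rw [integral_add (hw.continuous.integrable_of_hasCompactSupport hws)
    ((integrable_fderiv_apply_of_hasCompactSupport hw hws continuous_id').const_mul _),
    integral_const_mul, hradial]
  ring

/-- ∫ ∇u·∇v = −((N−2)/2) ∫ ‖∇u‖², where v(x) = x·∇u(x), for smooth compactly
supported u (Pohozaev identity computation, Proposition 4.1 of the paper). -/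
theorem integral_grad_u_dot_grad_v
    (N : ℕ) (hN : 1 ≤ N) (u : EuclideanSpace ℝ (Fin N) → ℝ)
    (hu : ContDiff ℝ (⊤ : ℕ∞) u) (hsupp : HasCompactSupport u)
    (v : EuclideanSpace ℝ (Fin N) → ℝ)
    (hv : ∀ x, v x = (inner ℝ x (gradient u x) : ℝ)) :
    ∫ x, (inner ℝ (gradient u x) (gradient v x) : ℝ) ∂volume
      = -(((N : ℝ) - 2) / 2) * ∫ x, ‖gradient u x‖ ^ 2 ∂volume := by
  obtain rfl := funext hv
  simpa using integral_grad_u_dot_grad_v_general volume (contDiff_infty.1 hu 2) hsupp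
end
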